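/- arXiv:1902.01110 — 3 statements merged into one kernel-verified Lean document; each statement's English description precedes it below -/
import Mathlib

section
/- Let G = (V, c) be an infinite, connected weighted graph. Then the free effective resistance satisfies R^F(x,y) = 1/(c_x · P_x[τ_y ≤ τ_x⁺]) for all pairs of distinct vertices x, y ∈ V if and only if G is recurrent. -/
/-!
Let `α_n` and `β_n` be the probabilities that the walk on `G_n` started at `x` returns to `x`
before hitting `y`, resp. hits `y` before returning to `x`, and let `α`, `β` be those for the walk
on `G`. The finite walk hits `{x, y}` almost surely, so `α_n + β_n = 1`. The event `τ_y ≤ τ_x⁺`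
has probability `1 - α`. As the degrees converge to the positive number `c_x`
(`tendsto_resistance_iff`), the claimed formula for `x, y` says `β_n → 1 - α`, that is `α_n → α`.

All hitting probabilities are sums over paths of products of transition probabilities, and these
converge, so Fatou's lemma gives `α ≤ liminf α_n` and `β ≤ liminf β_n`. If `G` is recurrent then
`α + β = 1`, whence `α_n → α` and `β_n → β` (`tendsto_of_add`).

Conversely suppose `α_n → α` for all pairs. No mass is lost in the first-return sums, so every
partial sum converges too (`tendsto_term`); hence `P^n_z[τ_x < τ_y] → P_z[τ_x < τ_y]` for every
`z ∉ {x, y}` (`tendsto_hit_of_tendsto_hitPos`), and the same holds with `x` and `y` exchanged.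
Adding the two limits gives `P_z[τ_{x,y} < ∞] = 1` (`hit_pair_eq_one`). So the walk hits `{x, y}`
almost surely from everywhere, and since `x` can be reached from `y`, a minimum principle shows
that it returns to `x` almost surely (`hitPos_eq_one_of_pair`).
-/

open MeasureTheory Filter Topology Classical
open scoped ENNReal

noncomputable section

/-- A weighted graph on an (at most countable) vertex set `V`. -/
structure WeightedGraph (V : Type) where
  c : V → V → ℝ
  nonneg : ∀ x y, 0 ≤ c x y
  symm : ∀ x y, c x y = c y x
  loopless : ∀ x, c x x = 0
  row_summable : ∀ x, Summable (c x)

namespace WeightedGraph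

variable {V : Type}

/-- adjacency: positive weight -/
def Adj (G : WeightedGraph V) (x y : V) : Prop := 0 < G.c x y

/-- connectivity of a weighted graph -/
def Connected (G : WeightedGraph V) : Prop :=
  ∀ x y : V, Relation.ReflTransGen G.Adj x y

/-- `c_x`, the total weight at `x` -/
def deg (G : WeightedGraph V) (x : V) : ℝ := ∑' y, G.c x y

/-- `p(x,y) = c(x,y)/c_x`, the transition matrix of the random walk on `G` -/
def trans (G : WeightedGraph V) (x y : V) : ℝ := G.c x y / G.deg x

/-- `G` is a subgraph of an infinite line -/
def IsSubgraphOfLine (G : WeightedGraph V) : Prop :=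
  ∃ f : V → ℤ, Function.Injective f ∧ ∀ x y : V, 0 < G.c x y → |f x - f y| = 1

/-- weights of the induced subgraph on a finite vertex set `A` -/
def restrictW (G : WeightedGraph V) (A : Finset V) (x y : V) : ℝ :=
  if x ∈ A ∧ y ∈ A then G.c x y else 0

/-- `(c_n)_x`, the degree inside `A` -/
def degIn (G : WeightedGraph V) (A : Finset V) (x : V) : ℝ := ∑ y ∈ A, G.c x y

/-- `p_n`, transition matrix of the induced walk (zero outside of `A`) -/
def transIn (G : WeightedGraph V) (A : Finset V) (x y : V) : ℝ :=
  restrictW G A x y / degIn G A x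

/-- the inner boundary `∂ᵢA` -/
def innerBoundary (G : WeightedGraph V) (A : Finset V) : Set V :=
  {v | v ∈ A ∧ ∃ w, w ∉ A ∧ 0 < G.c v w}

/-- weights `c̄ₙ` of the extended graph `Ḡₙ`, realized on `V ⊕ V` where `Sum.inr v`
plays the role of the boundary copy `v̄`. -/
def extW (G : WeightedGraph V) (A : Finset V) : V ⊕ V → V ⊕ V → ℝ
  | Sum.inl x, Sum.inl y => if x ∈ A ∧ y ∈ A then G.c x y else 0
  | Sum.inl v, Sum.inr w => if v = w ∧ v ∈ A then ∑' z, (if z ∈ A then 0 else G.c v z) else 0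
  | Sum.inr w, Sum.inl v => if v = w ∧ v ∈ A then ∑' z, (if z ∈ A then 0 else G.c v z) else 0
  | Sum.inr _, Sum.inr _ => 0

/-- `(c̄ₙ)_s` -/
def extDeg (G : WeightedGraph V) (A : Finset V) (s : V ⊕ V) : ℝ := ∑' t, extW G A s t

/-- `p̄ₙ`, the transition matrix of the random walk on the extended graph -/
def extTrans (G : WeightedGraph V) (A : Finset V) (s t : V ⊕ V) : ℝ :=
  extW G A s t / extDeg G A s

/-- the set `Vₙ* = V̄ₙ ∖ Vₙ` of boundary copies, as a subset of `V ⊕ V` -/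
def boundaryCopies (G : WeightedGraph V) (A : Finset V) : Set (V ⊕ V) :=
  {s | ∃ v ∈ innerBoundary G A, s = Sum.inr v}

/-- a finite exhaustion whose induced subgraphs are connected -/
def IsExhaustion (G : WeightedGraph V) (Vn : ℕ → Finset V) : Prop :=
  (∀ n, Vn n ⊆ Vn (n + 1)) ∧ (∀ x : V, ∃ n, x ∈ Vn n) ∧
    ∀ n, ∀ x ∈ Vn n, ∀ y ∈ Vn n,
      Relation.ReflTransGen (fun a b => a ∈ Vn n ∧ b ∈ Vn n ∧ 0 < G.c a b) x y

end WeightedGraph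

/-- the first hitting time `τ_A` of a set `A` (`⊤` if `A` is never visited) -/
def hitTime {S : Type} (A : Set S) (ω : ℕ → S) : ℕ∞ :=
  sInf {n : ℕ∞ | ∃ k : ℕ, (k : ℕ∞) = n ∧ ω k ∈ A}

/-- the hitting time `τ_A⁺` of a set `A` after time zero -/
def hitTime1 {S : Type} (A : Set S) (ω : ℕ → S) : ℕ∞ :=
  sInf {n : ℕ∞ | ∃ k : ℕ, 1 ≤ k ∧ (k : ℕ∞) = n ∧ ω k ∈ A}

/-- the product σ-algebra `(2^S)^{⊗ℕ}` on the trajectory space `S^{ℕ₀}` -/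
def trajMS (S : Type) : MeasurableSpace (ℕ → S) :=
  @MeasurableSpace.pi ℕ (fun _ => S) (fun _ => ⊤)

/-- measures on the trajectory space -/
abbrev TrajMeasure (S : Type) := @MeasureTheory.Measure (ℕ → S) (trajMS S)

/-- `μ` is (the law of) the Markov chain with transition matrix `p` and initial
distribution `δ_x`: a probability measure with the prescribed cylinder probabilities. -/
def IsRandomWalk {S : Type} (p : S → S → ℝ) (x : S) (μ : TrajMeasure S) : Prop :=
  μ Set.univ = 1 ∧
    ∀ (n : ℕ) (f : ℕ → S),
      μ {ω | ∀ k ≤ n, ω k = f k} =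
        (if f 0 = x then 1 else 0) *
          ∏ k ∈ Finset.range n, ENNReal.ofReal (p (f k) (f (k + 1)))

/-- the family of walks `P` is recurrent: `P_x[τ_x⁺ < ∞] = 1` for every start `x` -/
def IsRecurrentFamily {V : Type} (P : V → TrajMeasure V) : Prop :=
  ∀ x : V, P x {ω | hitTime1 {x} ω < ⊤} = 1

/-- `l` is a path `x → y` with respect to the weight function `w`: it starts at `x`,
ends at `y`, has positive weights along all of its steps, and avoids `x` and `y`
in its interior. -/
def IsPathBetween {S : Type} (w : S → S → ℝ) (x y : S) (l : List S) : Prop :=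
  2 ≤ l.length ∧ l.head? = some x ∧ l.getLast? = some y ∧
    l.Chain' (fun a b => 0 < w a b) ∧
    ∀ (i : ℕ) (h : i < l.length), 0 < i → i + 1 < l.length →
      l.get ⟨i, h⟩ ≠ x ∧ l.get ⟨i, h⟩ ≠ y

/-- the probability of a finite path: the product of the transition probabilities
along its steps -/
def pathProb {S : Type} (p : S → S → ℝ) (l : List S) : ℝ≥0∞ :=
  ENNReal.ofReal (((l.zip l.tail).map fun q => p q.1 q.2).prod)

/-- the projection `π` which removes all steps of the form `(v̄, v)`, i.e. collapses
every excursion `(v, v̄, v)` to a boundary copy to the single vertex `v` -/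
def projPath {V : Type} (l : List (V ⊕ V)) : List V :=
  List.destutter (· ≠ ·) (l.filterMap Sum.getLeft?)

end

/-! ### Hitting probabilities of a kernel -/

/-- `hitAt p T R k z`, for `R ⊆ T`: the probability that the chain with kernel `p` started at `z`
visits `T` for the first time at time exactly `k`, and does so in a point of `R`. It is given by
its one-step recursion, so that no measure on trajectories is involved and `p` need not be
stochastic. -/
noncomputable def hitAt {V : Type} (p : V → V → ℝ≥0∞) (T R : Set V) : ℕ → V → ℝ≥0∞
  | 0, z => if z ∈ R then 1 else 0
  | k + 1, z => if z ∈ T then 0 else ∑' w, p z w * hitAt p T R k w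

/-- The probability that the chain started at `z` ever visits `T`, the first visit (time `0`
included) being in `R`. -/
noncomputable def hit {V : Type} (p : V → V → ℝ≥0∞) (T R : Set V) (z : V) : ℝ≥0∞ :=
  ∑' k, hitAt p T R k z

/-- As `hit`, for the first visit to `T` at a time `≥ 1`. -/
noncomputable def hitPos {V : Type} (p : V → V → ℝ≥0∞) (T R : Set V) (z : V) : ℝ≥0∞ :=
  ∑' w, p z w * hit p T R w

section hitting
variable {V : Type}

lemma hit_of_mem (p : V → V → ℝ≥0∞) {T : Set V} (R : Set V) {z : V} (hz : z ∈ T) :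
    hit p T R z = if z ∈ R then 1 else 0 := by
  rw [hit, tsum_eq_single 0]
  · rfl
  · intro k hk
    obtain ⟨k, rfl⟩ := Nat.exists_eq_succ_of_ne_zero hk
    simp [hitAt, hz]

lemma hit_of_notMem (p : V → V → ℝ≥0∞) {T R : Set V} (hRT : R ⊆ T) {z : V} (hz : z ∉ T) :
    hit p T R z = hitPos p T R z := by
  have h0 : hitAt p T R 0 z = 0 := if_neg fun h => hz (hRT h)
  rw [hit, tsum_eq_zero_add' ENNReal.summable, h0, zero_add, hitPos]
  simp_rw [hitAt, if_neg hz, hit, ← ENNReal.tsum_mul_left]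
  exact ENNReal.tsum_comm

lemma hitAt_union (p : V → V → ℝ≥0∞) (T : Set V) {R R' : Set V} (hd : Disjoint R R') (k : ℕ) (z : V) :
    hitAt p T (R ∪ R') k z = hitAt p T R k z + hitAt p T R' k z := by
  induction k generalizing z with
  | zero =>
    by_cases h : z ∈ R
    · have : z ∉ R' := Set.disjoint_left.1 hd h
      simp [hitAt, h, this]
    · simp [hitAt, h]
  | succ k ih =>
    by_cases h : z ∈ T
    · simp [hitAt, h]
    · simp [hitAt, h, ih, mul_add, ENNReal.tsum_add]

lemma hit_union (p : V → V → ℝ≥0∞) (T : Set V) {R R' : Set V} (hd : Disjoint R R') (z : V) :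
    hit p T (R ∪ R') z = hit p T R z + hit p T R' z := by
  simp [hit, hitAt_union p T hd, ENNReal.tsum_add]

lemma hitPos_union (p : V → V → ℝ≥0∞) (T : Set V) {R R' : Set V} (hd : Disjoint R R') (z : V) :
    hitPos p T (R ∪ R') z = hitPos p T R z + hitPos p T R' z := by
  simp [hitPos, hit_union p T hd, mul_add, ENNReal.tsum_add]

/-- Off `T`, `hit p T R` is the smallest superharmonic function that dominates the indicator of
`R` on `T`. -/
lemma mul_hit_le (p : V → V → ℝ≥0∞) {T R : Set V} (hRT : R ⊆ T) (u : V → ℝ≥0∞) (m : ℝ≥0∞)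
    (hR : ∀ z ∈ R, m ≤ u z) (hu : ∀ z ∉ T, ∑' w, p z w * u w ≤ u z) (z : V) :
    m * hit p T R z ≤ u z := by
  have key : ∀ K z, m * ∑ k ∈ Finset.range K, hitAt p T R k z ≤ u z := by
    intro K
    induction K with
    | zero => simp
    | succ K ih =>
      intro z
      by_cases hz : z ∈ T
      · rw [Finset.sum_range_succ']
        by_cases hzR : z ∈ R
        · simpa [hitAt, hz, hzR] using hR z hzR
        · simp [hitAt, hz, hzR]
      · refine le_trans ?_ (hu z hz)
        rw [Finset.sum_range_succ']
        have h0 : hitAt p T R 0 z = 0 := if_neg fun h => hz (hRT h)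
        simp_rw [h0, add_zero, hitAt, if_neg hz]
        rw [← Summable.tsum_finsetSum (fun _ _ => ENNReal.summable), ← ENNReal.tsum_mul_left]
        refine ENNReal.tsum_le_tsum fun w => ?_
        rw [← Finset.mul_sum, mul_left_comm]
        gcongr
        exact ih w
  rw [hit, ← ENNReal.tsum_mul_left]
  refine ENNReal.tsum_le_of_sum_range_le fun K => ?_
  rw [← Finset.mul_sum]
  exact key K z

lemma hit_le_one (p : V → V → ℝ≥0∞) {T R : Set V} (hRT : R ⊆ T) (hrow : ∀ z, ∑' w, p z w ≤ 1)
    (z : V) : hit p T R z ≤ 1 := by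
  simpa using mul_hit_le p hRT (fun _ => 1) 1 (by simp) (by simpa using fun z _ => hrow z) z

lemma hitPos_le_one (p : V → V → ℝ≥0∞) {T R : Set V} (hRT : R ⊆ T) (hrow : ∀ z, ∑' w, p z w ≤ 1)
    (z : V) : hitPos p T R z ≤ 1 :=
  le_trans (ENNReal.tsum_le_tsum fun w => mul_le_of_le_one_right' (hit_le_one p hRT hrow w)) (hrow z)

/-- A chain that can leave `B` only through `T \ R` never enters `T` through `R`. -/
lemma hit_eq_zero (p : V → V → ℝ≥0∞) {T R B : Set V} (hBR : Disjoint B R)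
    (hB : ∀ z ∈ B, ∀ w, p z w ≠ 0 → w ∈ B ∨ w ∈ T \ R) {z : V} (hz : z ∈ B) :
    hit p T R z = 0 := by
  have key : ∀ k z, z ∈ B ∨ z ∈ T \ R → hitAt p T R k z = 0 := by
    intro k
    induction k with
    | zero =>
      rintro z (h | h)
      · simp [hitAt, Set.disjoint_left.1 hBR h]
      · simp [hitAt, h.2]
    | succ k ih =>
      rintro z h
      by_cases hzT : z ∈ T
      · simp [hitAt, hzT]
      · have hzB : z ∈ B := h.resolve_right fun h => hzT h.1
        simp only [hitAt, hzT, if_false, ENNReal.tsum_eq_zero, mul_eq_zero]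
        intro w
        by_cases hw : p z w = 0
        · exact Or.inl hw
        · exact Or.inr (ih w (hB z hzB w hw))
  simp [hit, key _ _ (Or.inl hz)]

/-- Minimum principle: a function that is harmonic on `A \ T`, attains its minimum `m` over the
closed set `A` at `z`, and for which some point of `T` is reachable from `z`, takes the value `m`
somewhere on `T`: at each point off `T` where the value is `m`, it is `m` at all neighbours as well. -/
lemma min_principle (p : V → V → ℝ≥0∞) (A T : Set V) (s : V → ℝ≥0∞) (m : ℝ≥0∞) (hm : m ≠ ⊤)
    (hA : ∀ z ∈ A, ∀ w, p z w ≠ 0 → w ∈ A) (hrow : ∀ z ∈ A, ∑' w, p z w = 1)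
    (hs : ∀ z ∈ A, z ∉ T → s z = ∑' w, p z w * s w) (hms : ∀ z ∈ A, m ≤ s z)
    {z t : V} (hz : z ∈ A) (hzm : s z = m) (ht : t ∈ T)
    (hpath : Relation.ReflTransGen (fun a b => p a b ≠ 0) z t) : ∃ t ∈ T, s t = m := by
  induction hpath using Relation.ReflTransGen.head_induction_on with
  | refl => exact ⟨t, ht, hzm⟩
  | @head a c hac _ ih =>
    by_cases haT : a ∈ T
    · exact ⟨a, haT, hzm⟩
    · refine ih (hA a hz c hac) ?_
      by_contra hne
      have hlt : m < s c := lt_of_le_of_ne (hms c (hA a hz c hac)) (Ne.symm hne)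
      have hfin : p a c ≠ ⊤ := ne_top_of_le_ne_top ENNReal.one_ne_top
        ((ENNReal.le_tsum c).trans (hrow a hz).le)
      have : ∑' w, p a w * m < ∑' w, p a w * s w := by
        refine ENNReal.tsum_lt_tsum (i := c) ?_ ?_ ?_
        · rw [ENNReal.tsum_mul_right, hrow a hz, one_mul]; exact hm
        · intro w
          by_cases hw : p a w = 0
          · simp [hw]
          · exact mul_le_mul_right (hms w (hA a hz w hw)) _
        · exact (ENNReal.mul_lt_mul_iff_right hac hfin).2 hlt
      rw [ENNReal.tsum_mul_right, hrow a hz, one_mul, ← hs a hz haT, hzm] at this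
      exact lt_irrefl _ this

end hitting
/-! ### Hitting probabilities along a convergent sequence of kernels -/

section limits

/-- Fatou's lemma for sums. -/
lemma tsum_le_liminf {ι : Type} {a : ι → ℝ≥0∞} {an : ℕ → ι → ℝ≥0∞}
    (h : ∀ i, a i ≤ liminf (fun n => an n i) atTop) :
    ∑' i, a i ≤ liminf (fun n => ∑' i, an n i) atTop := by
  let _ : MeasurableSpace ι := ⊤
  have := lintegral_liminf_le (μ := Measure.count) (f := an) (u := atTop) (fun i => measurable_from_top)
  simp only [lintegral_count] at this
  exact (ENNReal.tsum_le_tsum h).trans this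

lemma add_le_liminf {A B : ℝ≥0∞} {An Bn : ℕ → ℝ≥0∞} (hA : A ≤ liminf An atTop)
    (hB : B ≤ liminf Bn atTop) : A + B ≤ liminf (fun n => An n + Bn n) atTop := by
  have := tsum_le_liminf (ι := Bool) (a := fun b => cond b A B)
    (an := fun n b => cond b (An n) (Bn n)) (by rintro (_ | _) <;> simpa)
  simpa [tsum_bool, add_comm] using this

/-- If neither of two sequences loses mass in the limit and their sum converges to the sum of the
lower bounds, then the first one (and, by
symmetry, the second) converges. -/
lemma tendsto_of_add {A B : ℝ≥0∞} {An Bn : ℕ → ℝ≥0∞} (hA : A ≤ liminf An atTop)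
    (hB : B ≤ liminf Bn atTop) (hAB : Tendsto (fun n => An n + Bn n) atTop (𝓝 (A + B)))
    (hfin : A + B ≠ ⊤) : Tendsto An atTop (𝓝 A) := by
  refine tendsto_of_le_liminf_of_limsup_le hA ?_
  refine le_of_forall_gt fun c hc => ?_
  obtain ⟨c', hAc', hc'c⟩ := exists_between hc
  have hBfin : B ≠ ⊤ := fun h => hfin (by simp [h])
  have h1 : A + B < c' + B := (ENNReal.add_lt_add_iff_right hBfin).2 hAc'
  obtain ⟨d, hd1, hd2⟩ := exists_between h1
  have h2 := eventually_lt_of_lt_liminf (hd2.trans_le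
    (add_le_liminf (An := fun _ => c') (by simp) hB))
  have h3 := hAB.eventually_lt_const hd1
  refine lt_of_le_of_lt (limsup_le_of_le (by isBoundedDefault) ?_) hc'c
  filter_upwards [h2, h3] with n hn2 hn3
  exact (lt_of_add_lt_add_right (hn3.trans hn2)).le

/-- The same for series: convergence of the total mass forces convergence of every term. -/
lemma tendsto_term {ι : Type} {a : ι → ℝ≥0∞} {an : ℕ → ι → ℝ≥0∞}
    (h : ∀ i, a i ≤ liminf (fun n => an n i) atTop)
    (hS : Tendsto (fun n => ∑' i, an n i) atTop (𝓝 (∑' i, a i))) (hfin : ∑' i, a i ≠ ⊤) (i : ι) :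
    Tendsto (fun n => an n i) atTop (𝓝 (a i)) := by
  have hs : ∀ b : ι → ℝ≥0∞, ∑' j, b j = b i + ∑' j, if j = i then 0 else b j := fun b =>
    ENNReal.summable.tsum_eq_add_tsum_ite' i
  simp only [hs a] at hS hfin
  simp only [hs (an _)] at hS
  refine tendsto_of_add (h i) (tsum_le_liminf fun j => ?_) hS hfin
  by_cases hj : j = i
  · simp [hj]
  · simpa [hj] using h j

variable {V : Type} {p : V → V → ℝ≥0∞} {pn : ℕ → V → V → ℝ≥0∞}

lemma mul_le_liminf {a b : ℝ≥0∞} {an bn : ℕ → ℝ≥0∞} (ha : a ≤ liminf an atTop)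
    (hb : b ≤ liminf bn atTop) : a * b ≤ liminf (fun n => an n * bn n) atTop :=
  (mul_le_mul' ha hb).trans ENNReal.le_liminf_mul

lemma hitAt_le_liminf (hlim : ∀ z w, Tendsto (fun n => pn n z w) atTop (𝓝 (p z w))) (T R : Set V)
    (k : ℕ) (z : V) : hitAt p T R k z ≤ liminf (fun n => hitAt (pn n) T R k z) atTop := by
  induction k generalizing z with
  | zero => simp [hitAt]
  | succ k ih =>
    by_cases hz : z ∈ T
    · simp [hitAt, hz]
    · simp only [hitAt, hz, if_false]
      exact tsum_le_liminf fun w => mul_le_liminf (hlim z w).liminf_eq.ge (ih w)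

lemma hit_le_liminf (hlim : ∀ z w, Tendsto (fun n => pn n z w) atTop (𝓝 (p z w))) (T R : Set V)
    (z : V) : hit p T R z ≤ liminf (fun n => hit (pn n) T R z) atTop :=
  tsum_le_liminf fun k => hitAt_le_liminf hlim T R k z

lemma hitPos_le_liminf (hlim : ∀ z w, Tendsto (fun n => pn n z w) atTop (𝓝 (p z w))) (T R : Set V)
    (z : V) : hitPos p T R z ≤ liminf (fun n => hitPos (pn n) T R z) atTop :=
  tsum_le_liminf fun w => mul_le_liminf (hlim z w).liminf_eq.ge (hit_le_liminf hlim T R w)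

/-- Convergence of the hitting probabilities propagates along an edge `z → w`. -/
lemma tendsto_hit_step (hlim : ∀ z w, Tendsto (fun n => pn n z w) atTop (𝓝 (p z w)))
    (hrow : ∀ z, ∑' w, p z w = 1) {T R : Set V} (hRT : R ⊆ T) {z : V}
    (hz : Tendsto (fun n => hitPos (pn n) T R z) atTop (𝓝 (hitPos p T R z))) {w : V} (hw : p z w ≠ 0) :
    Tendsto (fun n => hit (pn n) T R w) atTop (𝓝 (hit p T R w)) := by
  have hle : ∀ w, p z w ≤ 1 := fun w => (ENNReal.le_tsum w).trans (hrow z).le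
  have h := tendsto_term (a := fun w => p z w * hit p T R w)
    (fun w => mul_le_liminf (hlim z w).liminf_eq.ge (hit_le_liminf hlim T R w)) hz
    (ne_top_of_le_ne_top ENNReal.one_ne_top (hitPos_le_one p hRT (fun z => (hrow z).le) z)) w
  have hpt : p z w ≠ ⊤ := ne_top_of_le_ne_top ENNReal.one_ne_top (hle w)
  have h2 := ENNReal.Tendsto.div h (Or.inr hw) (hlim z w) (Or.inl hpt)
  rw [mul_comm, ENNReal.mul_div_cancel_right hw hpt] at h2
  refine h2.congr' ?_
  filter_upwards [(hlim z w).eventually_ne hw, (hlim z w).eventually_ne hpt] with n h0 ht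
  rw [mul_comm, ENNReal.mul_div_cancel_right h0 ht]

/-- If the probability of returning to `x` before `T \ {x}` converges, then the probabilities of
entering `T` at `x` converge from every starting point off `T`. Vertices that are joined to `x` off `T`
inherit convergence edge by edge; from all the others the probabilities are `0`. -/
lemma tendsto_hit_of_tendsto_hitPos
    (hlim : ∀ z w, Tendsto (fun n => pn n z w) atTop (𝓝 (p z w)))
    (hrow : ∀ z, ∑' w, p z w = 1) (hsymm : ∀ z w, p z w ≠ 0 → p w z ≠ 0)
    (hpn : ∀ n z w, pn n z w ≠ 0 → p z w ≠ 0) {T : Set V} {x : V} (hxT : x ∈ T)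
    (hx : Tendsto (fun n => hitPos (pn n) T {x} x) atTop (𝓝 (hitPos p T {x} x))) {z : V} (hz : z ∉ T) :
    Tendsto (fun n => hit (pn n) T {x} z) atTop (𝓝 (hit p T {x} z)) := by
  have hRT : {x} ⊆ T := by simpa using hxT
  by_contra hbad
  -- The neighbours of a bad vertex are bad or lie in `T \ {x}`, hence `x` is entered from no bad
  -- vertex, and convergence there is trivial after all.
  let B : Set V := {z | z ∉ T ∧ ¬ Tendsto (fun n => hit (pn n) T {x} z) atTop (𝓝 (hit p T {x} z))}
  have hBR : Disjoint B {x} := by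
    rw [Set.disjoint_singleton_right]
    exact fun h => h.1 hxT
  have hB : ∀ z ∈ B, ∀ w, p z w ≠ 0 → w ∈ B ∨ w ∈ T \ {x} := by
    rintro z ⟨hzT, hzn⟩ w hw
    by_cases hwT : w ∈ T
    · refine Or.inr ⟨hwT, fun hwx => hzn ?_⟩
      obtain rfl : w = x := hwx
      exact tendsto_hit_step hlim hrow hRT hx (hsymm _ _ hw)
    · refine Or.inl ⟨hwT, fun hwn => hzn ?_⟩
      simp only [hit_of_notMem _ hRT hwT] at hwn
      exact tendsto_hit_step hlim hrow hRT hwn (hsymm _ _ hw)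
  have hzB : z ∈ B := ⟨hz, hbad⟩
  apply hbad
  rw [hit_eq_zero p hBR hB hzB]
  have h0 : ∀ n, hit (pn n) T {x} z = 0 := fun n =>
    hit_eq_zero (pn n) hBR (fun z hz w hw => hB z hz w (hpn n z w hw)) hzB
  simp [h0]

end limits

/-! ### From trajectory measures to hitting probabilities -/

section measure
variable {V : Type}

lemma measurableSet_eval (k : ℕ) (A : Set V) : MeasurableSet[trajMS V] {ω : ℕ → V | ω k ∈ A} := by
  let _ : MeasurableSpace V := ⊤
  exact (measurable_pi_apply (X := fun _ : ℕ => V) k) (MeasurableSet.of_discrete (s := A))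

lemma measurableSet_passageAt (T R : Set V) (m k : ℕ) :
    MeasurableSet[trajMS V] {ω : ℕ → V | ω (m + k) ∈ R ∧ ∀ j < k, ω (m + j) ∉ T} := by
  let _ := trajMS V
  refine (measurableSet_eval (m + k) R).inter (?_ : MeasurableSet {ω : ℕ → V | ∀ j < k, ω (m + j) ∉ T})
  simp only [Set.ofPred_forall]
  exact MeasurableSet.iInter fun j => MeasurableSet.iInter fun _ => measurableSet_eval (m + j) Tᶜ

lemma measurableSet_cyl (m : ℕ) (f : ℕ → V) :
    MeasurableSet[trajMS V] {ω : ℕ → V | ∀ i ≤ m, ω i = f i} := by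
  let _ := trajMS V
  simp only [Set.ofPred_forall]
  exact MeasurableSet.iInter fun j => MeasurableSet.iInter fun _ => measurableSet_eval j {f j}

/-- The Markov property at the fixed time `m`, for first-entrance events. -/
lemma measure_cyl_passage [Countable V] {p : V → V → ℝ} {x : V} {μ : TrajMeasure V}
    (hμ : IsRandomWalk p x μ) (T R : Set V) (k m : ℕ) (f : ℕ → V) :
    μ {ω | (∀ i ≤ m, ω i = f i) ∧ ω (m + k) ∈ R ∧ ∀ j < k, ω (m + j) ∉ T} =
      μ {ω | ∀ i ≤ m, ω i = f i} * hitAt (fun z w => ENNReal.ofReal (p z w)) T R k (f m) := by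
  let _ := trajMS V
  induction k generalizing m f with
  | zero =>
    by_cases h : f m ∈ R
    · simp only [hitAt, h, if_true, mul_one]
      congr 1; ext ω
      simp only [Set.mem_ofPred_eq, add_zero, not_lt_zero, false_imp_iff, implies_true, and_true,
        and_iff_left_iff_imp]
      intro hω
      rwa [hω m le_rfl]
    · simp only [hitAt, h, if_false, mul_zero]
      convert measure_empty (μ := μ)
      ext ω
      simp only [Set.mem_ofPred_eq, Set.mem_empty_iff_false, iff_false]
      rintro ⟨h1, h2, -⟩
      rw [add_zero, h1 m le_rfl] at h2
      exact h h2
  | succ k ih =>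
    by_cases h : f m ∈ T
    · simp only [hitAt, h, if_true, mul_zero]
      convert measure_empty (μ := μ)
      ext ω
      simp only [Set.mem_ofPred_eq, Set.mem_empty_iff_false, iff_false]
      rintro ⟨h1, -, h2⟩
      have := h2 0 (Nat.succ_pos k)
      rw [add_zero, h1 m le_rfl] at this
      exact this h
    · let g : V → ℕ → V := fun w => Function.update f (m + 1) w
      have hg : ∀ w, ∀ i ≤ m, g w i = f i := fun w i hi =>
        Function.update_of_ne (by omega) _ _
      have hg1 : ∀ w, g w (m + 1) = w := fun w => Function.update_self _ _ _
      have hset : {ω : ℕ → V | (∀ i ≤ m, ω i = f i) ∧ ω (m + (k + 1)) ∈ R ∧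
            ∀ j < k + 1, ω (m + j) ∉ T} =
          ⋃ w, {ω | (∀ i ≤ m + 1, ω i = g w i) ∧ ω (m + 1 + k) ∈ R ∧
            ∀ j < k, ω (m + 1 + j) ∉ T} := by
        ext ω
        simp only [Set.mem_ofPred_eq, Set.mem_iUnion]
        constructor
        · rintro ⟨h1, h2, h3⟩
          refine ⟨ω (m + 1), ?_, by rwa [add_assoc, add_comm 1 k], fun j hj => ?_⟩
          · intro i hi
            rcases Nat.lt_or_ge m i with hi' | hi'
            · obtain rfl : i = m + 1 := by omega
              rw [hg1]
            · rw [hg _ i hi', h1 i hi']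
          · have := h3 (j + 1) (by omega)
            rwa [add_assoc, add_comm 1 j]
        · rintro ⟨w, h1, h2, h3⟩
          have h1' : ∀ i ≤ m, ω i = f i := fun i hi => by rw [h1 i (by omega), hg w i hi]
          refine ⟨h1', by rwa [add_assoc, add_comm 1 k] at h2, fun j hj => ?_⟩
          rcases j with _ | j
          · rwa [add_zero, h1' m le_rfl]
          · have := h3 j (by omega)
            rwa [add_assoc, add_comm 1 j] at this
      -- The event is split according to the position at time `m + 1`.
      rw [hset, measure_iUnion]
      · simp only [hitAt, h, if_false]
        rw [← ENNReal.tsum_mul_left]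
        refine tsum_congr fun w => ?_
        rw [ih (m + 1) (g w), hμ.2 (m + 1) (g w), hμ.2 m f, Finset.prod_range_succ, hg1,
          hg w m le_rfl, hg w 0 (Nat.zero_le m)]
        rw [Finset.prod_congr rfl (g := fun k => ENNReal.ofReal (p (f k) (f (k + 1))))]
        · ring
        · intro i hi
          have := Finset.mem_range.1 hi
          rw [hg w i (by omega), hg w (i + 1) (by omega)]
      · intro w w' hne
        refine Set.disjoint_left.2 fun ω h1 h2 => hne ?_
        rw [← hg1 w, ← hg1 w', ← h1.1 (m + 1) le_rfl, h2.1 (m + 1) le_rfl]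
      · intro w
        exact (measurableSet_cyl (m + 1) (g w)).inter (measurableSet_passageAt T R (m + 1) k)

/-- The trajectories from `x` whose first visit to `T` at a time `≥ 1` exists and lies in `R`
(for `R ⊆ T`). -/
def passage (x : V) (T R : Set V) : Set (ℕ → V) :=
  {ω | ω 0 = x ∧ ∃ k, ω (1 + k) ∈ R ∧ ∀ j < k, ω (1 + j) ∉ T}

lemma measurableSet_passage (x : V) (T R : Set V) :
    MeasurableSet[trajMS V] (passage x T R) := by
  let _ := trajMS V
  refine (measurableSet_eval 0 {x}).inter
    (?_ : MeasurableSet {ω : ℕ → V | ∃ k, ω (1 + k) ∈ R ∧ ∀ j < k, ω (1 + j) ∉ T})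
  simp only [Set.ofPred_exists]
  exact MeasurableSet.iUnion fun k => measurableSet_passageAt T R 1 k

lemma measure_passage [Countable V] {p : V → V → ℝ} {x : V} {μ : TrajMeasure V}
    (hμ : IsRandomWalk p x μ) {T R : Set V} (hRT : R ⊆ T) :
    μ (passage x T R) = hitPos (fun z w => ENNReal.ofReal (p z w)) T R x := by
  let _ := trajMS V
  let f : V → ℕ → V := fun w i => if i = 0 then x else w
  have hset : passage x T R = ⋃ q : V × ℕ, {ω | (∀ i ≤ 1, ω i = f q.1 i) ∧ ω (1 + q.2) ∈ R ∧
      ∀ j < q.2, ω (1 + j) ∉ T} := by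
    ext ω
    simp only [passage, Set.mem_ofPred_eq, Set.mem_iUnion, Prod.exists]
    constructor
    · rintro ⟨h0, k, hk⟩
      refine ⟨ω 1, k, ?_, hk⟩
      intro i hi
      interval_cases i <;> simp [f, h0]
    · rintro ⟨w, k, h1, hk⟩
      exact ⟨by simpa [f] using h1 0 (by omega), k, hk⟩
  rw [hset, measure_iUnion, hitPos]
  · rw [ENNReal.tsum_prod (f := fun w k => μ {ω | (∀ i ≤ 1, ω i = f w i) ∧ ω (1 + k) ∈ R ∧
      ∀ j < k, ω (1 + j) ∉ T})]
    refine tsum_congr fun w => ?_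
    rw [hit, ← ENNReal.tsum_mul_left]
    refine tsum_congr fun k => ?_
    rw [measure_cyl_passage hμ, hμ.2]
    simp [f]
  · rintro ⟨w, k⟩ ⟨w', k'⟩ hne
    refine Set.disjoint_left.2 fun ω h1 h2 => hne ?_
    have e1 := h1.1 1 le_rfl
    have e2 := h2.1 1 le_rfl
    have : w = w' := by simpa [f] using e1.symm.trans e2
    rcases lt_trichotomy k k' with h | h | h
    · exact absurd (hRT h1.2.1) (h2.2.2 k h)
    · rw [this, h]
    · exact absurd (hRT h2.2.1) (h1.2.2 k' h)
  · intro q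
    exact (measurableSet_cyl 1 (f q.1)).inter (measurableSet_passageAt T R 1 q.2)

lemma measure_start {p : V → V → ℝ} {x : V} {μ : TrajMeasure V}
    (hμ : IsRandomWalk p x μ) : ∀ᵐ ω ∂μ, ω 0 = x := by
  let _ := trajMS V
  have : IsProbabilityMeasure μ := ⟨hμ.1⟩
  have h : μ {ω | ω 0 = x} = 1 := by
    have := hμ.2 0 (fun _ => x)
    simpa using this
  exact (prob_compl_eq_zero_iff (measurableSet_eval 0 {x})).2 h

/-- A transition matrix that admits a random walk started at `x` is stochastic at `x`. -/
lemma tsum_trans [Countable V] {p : V → V → ℝ} {x : V} {μ : TrajMeasure V}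
    (hμ : IsRandomWalk p x μ) : ∑' w, ENNReal.ofReal (p x w) = 1 := by
  let _ := trajMS V
  have h := measure_passage hμ (T := Set.univ) (R := Set.univ) subset_rfl
  have h2 : μ (passage x Set.univ Set.univ) = μ Set.univ := by
    apply measure_congr
    filter_upwards [measure_start hμ] with ω hω
    exact eq_true (show ω ∈ passage x Set.univ Set.univ from ⟨hω, 0, by simp⟩)
  rw [h2, hμ.1] at h
  simpa [hitPos, hit_of_mem] using h.symm

lemma hitTime_lt_iff {A : Set V} {ω : ℕ → V} {b : ℕ∞} :
    hitTime A ω < b ↔ ∃ k : ℕ, ω k ∈ A ∧ (k : ℕ∞) < b := by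
  simp only [hitTime, sInf_lt_iff, Set.mem_ofPred_eq]
  constructor
  · rintro ⟨_, ⟨k, rfl, hk⟩, h⟩; exact ⟨k, hk, h⟩
  · rintro ⟨k, hk, h⟩; exact ⟨_, ⟨k, rfl, hk⟩, h⟩

lemma hitTime1_lt_iff {A : Set V} {ω : ℕ → V} {b : ℕ∞} :
    hitTime1 A ω < b ↔ ∃ k : ℕ, 1 ≤ k ∧ ω k ∈ A ∧ (k : ℕ∞) < b := by
  simp only [hitTime1, sInf_lt_iff, Set.mem_ofPred_eq]
  constructor
  · rintro ⟨_, ⟨k, h1, rfl, hk⟩, h⟩; exact ⟨k, h1, hk, h⟩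
  · rintro ⟨k, h1, hk, h⟩; exact ⟨_, ⟨k, h1, rfl, hk⟩, h⟩

lemma lt_hitTime_iff {A : Set V} {ω : ℕ → V} {k : ℕ} :
    (k : ℕ∞) < hitTime A ω ↔ ∀ j : ℕ, ω j ∈ A → k < j := by
  have := hitTime_lt_iff (A := A) (ω := ω) (b := k + 1)
  rw [ENat.lt_add_one_iff (ENat.natCast_ne_top k)] at this
  rw [← not_le, this]
  push Not
  refine forall_congr' fun j => imp_congr_right fun _ => ?_
  rw [← Nat.add_one_le_iff]
  exact_mod_cast Iff.rfl

lemma lt_hitTime1_iff {A : Set V} {ω : ℕ → V} {k : ℕ} :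
    (k : ℕ∞) < hitTime1 A ω ↔ ∀ j : ℕ, 1 ≤ j → ω j ∈ A → k < j := by
  have := hitTime1_lt_iff (A := A) (ω := ω) (b := k + 1)
  rw [ENat.lt_add_one_iff (ENat.natCast_ne_top k)] at this
  rw [← not_le, this]
  push Not
  refine forall_congr' fun j => imp_congr_right fun _ => imp_congr_right fun _ => ?_
  rw [← Nat.add_one_le_iff]
  exact_mod_cast Iff.rfl

lemma exists_passage_iff {a b : V} (hab : a ≠ b) (ω : ℕ → V) :
    (∃ k, ω (1 + k) ∈ ({a} : Set V) ∧ ∀ j < k, ω (1 + j) ∉ ({a, b} : Set V)) ↔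
      ∃ k, 1 ≤ k ∧ ω k = a ∧ ∀ j, 1 ≤ j → ω j = b → k < j := by
  simp only [Set.mem_singleton_iff, Set.mem_insert_iff, not_or]
  constructor
  · rintro ⟨k, h1, h2⟩
    refine ⟨1 + k, by omega, h1, fun j hj hb => ?_⟩
    by_contra hlt
    rcases Nat.lt_or_ge j (1 + k) with h | h
    · obtain ⟨i, rfl⟩ := Nat.exists_eq_add_of_le hj
      exact (h2 i (by omega)).2 hb
    · obtain rfl : j = 1 + k := by omega
      exact hab (h1.symm.trans hb)
  · rintro ⟨k, hk, h1, h2⟩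
    have hex : ∃ i, ω (1 + i) = a := ⟨k - 1, by rwa [Nat.add_sub_cancel' hk]⟩
    refine ⟨Nat.find hex, Nat.find_spec hex, fun j hj => ⟨Nat.find_min hex hj, fun hb => ?_⟩⟩
    have := h2 (1 + j) (by omega) hb
    have hle : Nat.find hex ≤ k - 1 := Nat.find_min' hex (by rwa [Nat.add_sub_cancel' hk])
    omega

lemma mem_passage_target {x y : V} (hxy : x ≠ y) {ω : ℕ → V} (h0 : ω 0 = x) :
    ω ∈ passage x {x, y} {y} ↔ hitTime {y} ω < hitTime1 {x} ω := by
  rw [hitTime_lt_iff, passage, Set.mem_ofPred_eq, Set.pair_comm, exists_passage_iff hxy.symm]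
  simp only [h0, true_and, lt_hitTime1_iff, Set.mem_singleton_iff]
  refine exists_congr fun k => ⟨fun h => h.2, fun h => ⟨?_, h⟩⟩
  rcases k with _ | k
  · exact absurd (h0.symm.trans h.1) hxy
  · omega

lemma mem_passage_source {x y : V} (hxy : x ≠ y) {ω : ℕ → V} (h0 : ω 0 = x) :
    ω ∈ passage x {x, y} {x} ↔ hitTime1 {x} ω < hitTime {y} ω := by
  rw [hitTime1_lt_iff, passage, Set.mem_ofPred_eq, exists_passage_iff hxy]
  simp only [h0, true_and, lt_hitTime_iff, Set.mem_singleton_iff]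
  refine exists_congr fun k => and_congr_right fun _ => and_congr_right fun _ => ?_
  refine forall_congr' fun j => ⟨fun h hj => ?_, fun h _ => h⟩
  rcases j with _ | j
  · exact absurd (h0.symm.trans hj) hxy
  · exact h (by omega) hj

lemma mem_passage_return {x : V} {ω : ℕ → V} (h0 : ω 0 = x) :
    ω ∈ passage x {x} {x} ↔ hitTime1 {x} ω < ⊤ := by
  rw [hitTime1_lt_iff, passage, Set.mem_ofPred_eq]
  simp only [h0, true_and, Set.mem_singleton_iff, ENat.natCast_lt_top, and_true]
  constructor
  · rintro ⟨k, h, -⟩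
    exact ⟨1 + k, by omega, h⟩
  · rintro ⟨k, hk, h⟩
    have hex : ∃ i, ω (1 + i) = x := ⟨k - 1, by rwa [Nat.add_sub_cancel' hk]⟩
    exact ⟨Nat.find hex, Nat.find_spec hex, fun j hj => Nat.find_min hex hj⟩

variable [Countable V] {p : V → V → ℝ} {x y : V} {μ : TrajMeasure V}

lemma measure_target_lt (hμ : IsRandomWalk p x μ) (hxy : x ≠ y) :
    μ {ω | hitTime {y} ω < hitTime1 {x} ω} =
      hitPos (fun z w => ENNReal.ofReal (p z w)) {x, y} {y} x := by
  rw [← measure_passage hμ (by simp)]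
  apply measure_congr
  filter_upwards [measure_start hμ] with ω hω
  exact propext (mem_passage_target hxy hω).symm

/-- The event `τ_y ≤ τ_x⁺` contains the trajectories that visit neither vertex again; it is the
complement of a return to `x` before `y`. -/
lemma measure_target_le (hμ : IsRandomWalk p x μ) (hxy : x ≠ y) :
    μ {ω | hitTime {y} ω ≤ hitTime1 {x} ω} =
      1 - hitPos (fun z w => ENNReal.ofReal (p z w)) {x, y} {x} x := by
  let _ := trajMS V
  have : IsProbabilityMeasure μ := ⟨hμ.1⟩
  rw [← measure_passage hμ (by simp), ← prob_compl_eq_one_sub (measurableSet_passage _ _ _)]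
  apply measure_congr
  filter_upwards [measure_start hμ] with ω hω
  exact propext (not_lt.symm.trans (not_congr (mem_passage_source hxy hω).symm))

lemma measure_return (hμ : IsRandomWalk p x μ) :
    μ {ω | hitTime1 {x} ω < ⊤} = hitPos (fun z w => ENNReal.ofReal (p z w)) {x} {x} x := by
  rw [← measure_passage hμ subset_rfl]
  apply measure_congr
  filter_upwards [measure_start hμ] with ω hω
  exact propext (mem_passage_return hω).symm

end measure

/-! ### Almost sure hitting -/

section recurrence
variable {V : Type}

/-- In a finite closed set from which `x ∈ T` is always reachable, `T` is hit almost surely: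
by the minimum principle the hitting probability attains its minimum on `T`. -/
lemma hit_eq_one_of_finite {p : V → V → ℝ≥0∞} (hrow : ∀ z, ∑' w, p z w ≤ 1) {A : Finset V}
    (hA : ∀ z ∈ A, ∀ w, p z w ≠ 0 → w ∈ A) (hpA : ∀ z ∈ A, ∑' w, p z w = 1)
    {T : Set V} {x : V} (hxT : x ∈ T)
    (hpath : ∀ z ∈ A, Relation.ReflTransGen (fun a b => p a b ≠ 0) z x) {z : V} (hz : z ∈ A) :
    hit p T T z = 1 := by
  obtain ⟨z₀, hz₀, hmin⟩ := A.exists_min_image (hit p T T) ⟨z, hz⟩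
  obtain ⟨t, ht, hst⟩ := min_principle p A T (hit p T T) (hit p T T z₀)
    (ne_top_of_le_ne_top ENNReal.one_ne_top (hit_le_one p subset_rfl hrow z₀)) hA hpA
    (fun z _ hzT => hit_of_notMem p subset_rfl hzT) hmin hz₀ rfl hxT (hpath z₀ hz₀)
  rw [hit_of_mem p T ht, if_pos ht] at hst
  exact le_antisymm (hit_le_one p subset_rfl hrow z) (hst.le.trans (hmin z hz))

/-- If `{x, y}` is hit almost surely from everywhere and `x` is reachable from `y`, then the chain
returns to `x` almost surely. The probability `h` of ever visiting `x` is superharmonic with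
`h x = 1`, so it is at least `h y` everywhere; thus it attains its minimum at `y`, and the minimum
principle gives `h y = h x = 1`. -/
lemma hitPos_eq_one_of_pair {p : V → V → ℝ≥0∞} (hrow : ∀ z, ∑' w, p z w = 1) {x y : V}
    (hpath : Relation.ReflTransGen (fun a b => p a b ≠ 0) y x)
    (hT : ∀ z, hit p {x, y} {x, y} z = 1) : hitPos p {x} {x} x = 1 := by
  have hle : ∀ z, hit p {x} {x} z ≤ 1 := hit_le_one p subset_rfl fun z => (hrow z).le
  have hx : hit p {x} {x} x = 1 := by simp [hit_of_mem]
  have hstep : ∀ z ∉ ({x} : Set V), hit p {x} {x} z = ∑' w, p z w * hit p {x} {x} w :=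
    fun z hz => hit_of_notMem p subset_rfl hz
  have hmin : ∀ z, hit p {x} {x} y ≤ hit p {x} {x} z := by
    intro z
    have := mul_hit_le p (T := {x, y}) (R := {x, y}) subset_rfl (hit p {x} {x}) (hit p {x} {x} y)
      (by rintro z (rfl | rfl); exacts [hx ▸ hle y, le_rfl])
      (fun z hz => (hstep z fun h => hz (Or.inl h)).ge) z
    rwa [hT, mul_one] at this
  obtain ⟨t, ht, hst⟩ := min_principle p Set.univ {x} (hit p {x} {x}) (hit p {x} {x} y)
    (ne_top_of_le_ne_top ENNReal.one_ne_top (hle y)) (fun _ _ _ _ => trivial) (fun z _ => hrow z)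
    (fun z _ hz => hstep z hz) (fun z _ => hmin z) (Set.mem_univ y) rfl rfl hpath
  obtain rfl : t = x := ht
  have h1 : ∀ z, hit p {t} {t} z = 1 := fun z =>
    le_antisymm (hle z) (by rw [← hx, hst]; exact hmin z)
  simp [hitPos, h1, hrow]

end recurrence

/-! ### The walks on the graph and on the exhaustion -/

namespace WeightedGraph
variable {V : Type} (G : WeightedGraph V)

/-- The transition kernel of the walk on `G`, with extended nonnegative values. -/
noncomputable def q (z w : V) : ℝ≥0∞ := ENNReal.ofReal (G.trans z w)

/-- The transition kernel of the walk on the subgraph induced by `A`, with extended nonnegative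
values; it vanishes outside `A`. -/
noncomputable def qIn (A : Finset V) (z w : V) : ℝ≥0∞ := ENNReal.ofReal (G.transIn A z w)

variable {G}

lemma deg_pos (hq : ∀ z, ∑' w, G.q z w = 1) (z : V) : 0 < G.deg z := by
  refine lt_of_le_of_ne (tsum_nonneg (G.nonneg z)) fun h => ?_
  have := hq z
  simp [q, trans, ← h] at this

lemma q_ne_zero_iff (hq : ∀ z, ∑' w, G.q z w = 1) (z w : V) : G.q z w ≠ 0 ↔ 0 < G.c z w := by
  rw [q, trans, ne_eq, ENNReal.ofReal_eq_zero, not_le, div_pos_iff_of_pos_right (deg_pos hq z)]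

lemma qIn_ne_zero_iff (A : Finset V) (z w : V) :
    G.qIn A z w ≠ 0 ↔ z ∈ A ∧ w ∈ A ∧ 0 < G.c z w := by
  rw [qIn, transIn, restrictW, ne_eq, ENNReal.ofReal_eq_zero, not_le]
  by_cases h : z ∈ A ∧ w ∈ A
  · rw [if_pos h]
    constructor
    · intro hpos
      refine ⟨h.1, h.2, lt_of_le_of_ne (G.nonneg z w) fun h0 => ?_⟩
      simp [← h0] at hpos
    · rintro ⟨-, hw, hc⟩
      exact div_pos hc (hc.trans_le
        (Finset.single_le_sum (f := fun w => G.c z w) (fun w _ => G.nonneg z w) hw))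
  · rw [if_neg h]
    simp only [zero_div, lt_self_iff_false, false_iff]
    tauto

lemma tsum_qIn_le_one {A : Finset V} (hA : ∀ z ∈ A, ∑' w, G.qIn A z w = 1) (z : V) :
    ∑' w, G.qIn A z w ≤ 1 := by
  by_cases hz : z ∈ A
  · exact (hA z hz).le
  · have : ∀ w, G.qIn A z w = 0 := fun w => by
      by_contra h
      exact hz ((qIn_ne_zero_iff A z w).1 h).1
    simp [this]

variable {Vn : ℕ → Finset V}

lemma IsExhaustion.eventually_mem (hVn : G.IsExhaustion Vn) (x : V) : ∀ᶠ n in atTop, x ∈ Vn n := by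
  obtain ⟨N, hN⟩ := hVn.2.1 x
  filter_upwards [eventually_ge_atTop N] with n hn
  exact monotone_nat_of_le_succ hVn.1 hn hN

lemma IsExhaustion.tendsto_degIn (hVn : G.IsExhaustion Vn) (x : V) :
    Tendsto (fun n => G.degIn (Vn n) x) atTop (𝓝 (G.deg x)) :=
  (G.row_summable x).hasSum.comp
    (tendsto_atTop_finset_of_monotone (monotone_nat_of_le_succ hVn.1) hVn.2.1)

lemma IsExhaustion.tendsto_qIn (hVn : G.IsExhaustion Vn) (hq : ∀ z, ∑' w, G.q z w = 1) (z w : V) :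
    Tendsto (fun n => G.qIn (Vn n) z w) atTop (𝓝 (G.q z w)) := by
  refine ENNReal.tendsto_ofReal ?_
  refine ((tendsto_const_nhds (x := G.c z w)).div (hVn.tendsto_degIn z) (deg_pos hq z).ne').congr' ?_
  filter_upwards [hVn.eventually_mem z, hVn.eventually_mem w] with n hz hw
  rw [transIn, restrictW, if_pos ⟨hz, hw⟩]
  rfl

lemma hit_qIn_eq_one (hVn : G.IsExhaustion Vn) {n : ℕ}
    (hqn : ∀ z ∈ Vn n, ∑' w, G.qIn (Vn n) z w = 1) {T : Set V} {x : V} (hxT : x ∈ T)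
    (hx : x ∈ Vn n) {z : V} (hz : z ∈ Vn n) : hit (G.qIn (Vn n)) T T z = 1 :=
  hit_eq_one_of_finite (tsum_qIn_le_one hqn)
    (fun _ _ _ hw => ((qIn_ne_zero_iff _ _ _).1 hw).2.1) hqn hxT
    (fun z hz => Relation.ReflTransGen.mono (fun a b h => (qIn_ne_zero_iff _ a b).2 h) _ _
      (hVn.2.2 n z hz x hx)) hz

lemma hitPos_qIn_eq_one (hVn : G.IsExhaustion Vn) {n : ℕ}
    (hqn : ∀ z ∈ Vn n, ∑' w, G.qIn (Vn n) z w = 1) {T : Set V} {x : V} (hxT : x ∈ T)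
    (hx : x ∈ Vn n) : hitPos (G.qIn (Vn n)) T T x = 1 := by
  rw [← hqn x hx, hitPos]
  refine tsum_congr fun w => ?_
  by_cases hw : G.qIn (Vn n) x w = 0
  · simp [hw]
  · rw [hit_qIn_eq_one hVn hqn hxT hx ((qIn_ne_zero_iff _ _ _).1 hw).2.1, mul_one]

end WeightedGraph

/-! ### Comparison of the limit with the walk on the graph -/

section main
open WeightedGraph
variable {V : Type} {G : WeightedGraph V} {Vn : ℕ → Finset V}

lemma disjoint_pair {x y : V} (hxy : x ≠ y) : Disjoint ({x} : Set V) {y} := by simpa using hxy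

lemma hitPos_pair (p : V → V → ℝ≥0∞) {x y : V} (hxy : x ≠ y) (z : V) :
    hitPos p {x, y} {x, y} z = hitPos p {x, y} {x} z + hitPos p {x, y} {y} z :=
  hitPos_union p {x, y} (disjoint_pair hxy) z

lemma hit_pair (p : V → V → ℝ≥0∞) {x y : V} (hxy : x ≠ y) (z : V) :
    hit p {x, y} {x, y} z = hit p {x, y} {x} z + hit p {x, y} {y} z :=
  hit_union p {x, y} (disjoint_pair hxy) z

/-- Since `c_x` is positive and finite, convergence of resistances is convergence of the escape
probabilities. -/
lemma tendsto_resistance_iff (hVn : G.IsExhaustion Vn) (hq : ∀ z, ∑' w, G.q z w = 1) (x : V)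
    (a : ℕ → ℝ≥0∞) (b : ℝ≥0∞) (hb : b ≤ 1) :
    Tendsto (fun n => 1 / (ENNReal.ofReal (G.degIn (Vn n) x) * a n)) atTop
        (𝓝 (1 / (ENNReal.ofReal (G.deg x) * b))) ↔ Tendsto a atTop (𝓝 b) := by
  have hD : Tendsto (fun n => ENNReal.ofReal (G.degIn (Vn n) x)) atTop
      (𝓝 (ENNReal.ofReal (G.deg x))) := ENNReal.tendsto_ofReal (hVn.tendsto_degIn x)
  have h0 : ENNReal.ofReal (G.deg x) ≠ 0 := by simpa using deg_pos hq x
  have ht : ENNReal.ofReal (G.deg x) ≠ ⊤ := ENNReal.ofReal_ne_top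
  have hbt : b ≠ ⊤ := ne_top_of_le_ne_top ENNReal.one_ne_top hb
  simp only [one_div]
  rw [tendsto_inv_iff]
  constructor
  · intro h
    have h2 := ENNReal.Tendsto.div h (Or.inr h0) hD (Or.inl ht)
    rw [mul_comm, ENNReal.mul_div_cancel_right h0 ht] at h2
    refine h2.congr' ?_
    filter_upwards [hD.eventually_ne h0] with n hn
    rw [mul_comm, ENNReal.mul_div_cancel_right hn ENNReal.ofReal_ne_top]
  · intro h
    exact ENNReal.Tendsto.mul hD (Or.inl h0) h (Or.inr ht)

/-- If no mass is lost in the return probabilities to `x` before `y` and to `y` before `x`, then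
the walk on `G` hits `{x, y}` almost surely, as the finite walks do. -/
lemma hit_pair_eq_one (hVn : G.IsExhaustion Vn) (hq : ∀ z, ∑' w, G.q z w = 1)
    (hqn : ∀ n, ∀ z ∈ Vn n, ∑' w, G.qIn (Vn n) z w = 1) {x y : V} (hxy : x ≠ y)
    (hx : Tendsto (fun n => hitPos (G.qIn (Vn n)) {x, y} {x} x) atTop (𝓝 (hitPos G.q {x, y} {x} x)))
    (hy : Tendsto (fun n => hitPos (G.qIn (Vn n)) {x, y} {y} y) atTop (𝓝 (hitPos G.q {x, y} {y} y)))
    (z : V) : hit G.q {x, y} {x, y} z = 1 := by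
  by_cases hz : z ∈ ({x, y} : Set V)
  · rw [hit_of_mem _ _ hz, if_pos hz]
  · have hsymm : ∀ z w, G.q z w ≠ 0 → G.q w z ≠ 0 := fun z w h => by
      rw [q_ne_zero_iff hq] at h ⊢
      rwa [G.symm]
    have hpn : ∀ n z w, G.qIn (Vn n) z w ≠ 0 → G.q z w ≠ 0 := fun n z w h =>
      (q_ne_zero_iff hq z w).2 ((qIn_ne_zero_iff _ _ _).1 h).2.2
    have h1 := tendsto_hit_of_tendsto_hitPos (hVn.tendsto_qIn hq) hq hsymm hpn (by simp) hx hz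
    have h2 := tendsto_hit_of_tendsto_hitPos (hVn.tendsto_qIn hq) hq hsymm hpn (by simp) hy hz
    have h3 := h1.add h2
    rw [← hit_pair _ hxy] at h3
    refine tendsto_nhds_unique h3 (tendsto_const_nhds.congr' ?_)
    filter_upwards [hVn.eventually_mem x, hVn.eventually_mem z] with n hnx hnz
    rw [← hit_pair _ hxy, hit_qIn_eq_one hVn (hqn n) (by simp) hnx hnz]

lemma hitPos_source_add_target (hVn : G.IsExhaustion Vn)
    (hqn : ∀ n, ∀ z ∈ Vn n, ∑' w, G.qIn (Vn n) z w = 1) {x y : V} (hxy : x ≠ y) :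
    ∀ᶠ n in atTop, hitPos (G.qIn (Vn n)) {x, y} {x} x + hitPos (G.qIn (Vn n)) {x, y} {y} x = 1 := by
  filter_upwards [hVn.eventually_mem x] with n hnx
  rw [← hitPos_pair _ hxy, hitPos_qIn_eq_one hVn (hqn n) (by simp) hnx]

lemma tendsto_source_of_target (hVn : G.IsExhaustion Vn) (hq : ∀ z, ∑' w, G.q z w = 1)
    (hqn : ∀ n, ∀ z ∈ Vn n, ∑' w, G.qIn (Vn n) z w = 1) {x y : V} (hxy : x ≠ y)
    (h : Tendsto (fun n => hitPos (G.qIn (Vn n)) {x, y} {y} x) atTop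
      (𝓝 (1 - hitPos G.q {x, y} {x} x))) :
    Tendsto (fun n => hitPos (G.qIn (Vn n)) {x, y} {x} x) atTop (𝓝 (hitPos G.q {x, y} {x} x)) := by
  have hle : hitPos G.q {x, y} {x} x ≤ 1 := hitPos_le_one _ (by simp) (fun z => (hq z).le) x
  have h2 := ENNReal.Tendsto.sub (tendsto_const_nhds (x := (1 : ℝ≥0∞))) h (Or.inl ENNReal.one_ne_top)
  rw [ENNReal.sub_sub_cancel ENNReal.one_ne_top hle] at h2
  refine h2.congr' ?_
  filter_upwards [hitPos_source_add_target hVn hqn hxy] with n hn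
  rw [← hn]
  refine ENNReal.add_sub_cancel_right (ne_top_of_le_ne_top ENNReal.one_ne_top ?_)
  exact hn ▸ le_add_self

/-- If the walk on `G` revisits `{x, y}` almost surely, the probabilities of hitting `y` before
returning to `x` converge: both they and their complements can only gain mass in the limit. -/
lemma tendsto_target_of_add_eq_one (hVn : G.IsExhaustion Vn) (hq : ∀ z, ∑' w, G.q z w = 1)
    (hqn : ∀ n, ∀ z ∈ Vn n, ∑' w, G.qIn (Vn n) z w = 1) {x y : V} (hxy : x ≠ y)
    (h : hitPos G.q {x, y} {y} x + hitPos G.q {x, y} {x} x = 1) :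
    Tendsto (fun n => hitPos (G.qIn (Vn n)) {x, y} {y} x) atTop (𝓝 (hitPos G.q {x, y} {y} x)) := by
  refine tendsto_of_add (hitPos_le_liminf (hVn.tendsto_qIn hq) _ _ x)
    (hitPos_le_liminf (hVn.tendsto_qIn hq) _ {x} x) ?_ (h ▸ ENNReal.one_ne_top)
  rw [h]
  refine tendsto_const_nhds.congr' ?_
  filter_upwards [hitPos_source_add_target hVn hqn hxy] with n hn
  rw [add_comm, hn]

end main

/-- For an infinite, connected weighted graph `G`, the free effective
resistance satisfies `R^F(x,y) = 1/(c_x · P_x[τ_y ≤ τ_x⁺])` for all distinct `x, y`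
if and only if `G` is recurrent. -/
theorem free_resistance_lower_bound_attained_iff_recurrent
    {V : Type} [Countable V] [Infinite V] (G : WeightedGraph V) (hconn : G.Connected)
    (P : V → TrajMeasure V) (hP : ∀ x : V, IsRandomWalk G.trans x (P x))
    (Vn : ℕ → Finset V) (hVn : G.IsExhaustion Vn)
    (Pn : ℕ → V → TrajMeasure V)
    (hPn : ∀ n : ℕ, ∀ x ∈ Vn n, IsRandomWalk (G.transIn (Vn n)) x (Pn n x)) :
    (∀ x y : V, x ≠ y →
        Filter.Tendsto
          (fun n : ℕ => 1 / (ENNReal.ofReal (G.degIn (Vn n) x) *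
              Pn n x {ω | hitTime {y} ω < hitTime1 {x} ω}))
          Filter.atTop
          (nhds (1 / (ENNReal.ofReal (G.deg x) *
              P x {ω | hitTime {y} ω ≤ hitTime1 {x} ω})))) ↔
      IsRecurrentFamily P := by
  have hq : ∀ z, ∑' w, G.q z w = 1 := fun z => tsum_trans (hP z)
  have hqn : ∀ n, ∀ z ∈ Vn n, ∑' w, G.qIn (Vn n) z w = 1 := fun n z hz => tsum_trans (hPn n z hz)
  have hpair : ∀ x y : V, x ≠ y →
      (Filter.Tendsto
          (fun n : ℕ => 1 / (ENNReal.ofReal (G.degIn (Vn n) x) *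
              Pn n x {ω | hitTime {y} ω < hitTime1 {x} ω}))
          Filter.atTop
          (nhds (1 / (ENNReal.ofReal (G.deg x) *
              P x {ω | hitTime {y} ω ≤ hitTime1 {x} ω}))) ↔
        Tendsto (fun n => hitPos (G.qIn (Vn n)) {x, y} {y} x) atTop
          (𝓝 (1 - hitPos G.q {x, y} {x} x))) := by
    intro x y hxy
    rw [measure_target_le (hP x) hxy, tendsto_resistance_iff hVn hq x _ _ tsub_le_self]
    refine tendsto_congr' ?_
    filter_upwards [hVn.eventually_mem x] with n hn
    exact measure_target_lt (hPn n x hn) hxy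
  constructor
  · intro h x
    obtain ⟨y, hyx⟩ := exists_ne x
    have hxy := hyx.symm
    have h1 := tendsto_source_of_target hVn hq hqn hxy ((hpair x y hxy).1 (h x y hxy))
    have h2 := tendsto_source_of_target hVn hq hqn hyx ((hpair y x hyx).1 (h y x hyx))
    rw [Set.pair_comm y x] at h2
    rw [measure_return (hP x)]
    refine hitPos_eq_one_of_pair hq ?_ (hit_pair_eq_one hVn hq hqn hxy h1 h2)
    exact Relation.ReflTransGen.mono
      (fun a b hab => (WeightedGraph.q_ne_zero_iff hq a b).2 hab) _ _ (hconn y x)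
  · intro h x y hxy
    rw [hpair x y hxy]
    have hle : hitPos G.q {x, y} {y} x + hitPos G.q {x, y} {x} x ≤ 1 := by
      rw [add_comm, ← hitPos_pair _ hxy]
      exact hitPos_le_one _ subset_rfl (fun z => (hq z).le) x
    have hsum : hitPos G.q {x, y} {y} x + hitPos G.q {x, y} {x} x = 1 := by
      refine le_antisymm hle ?_
      have hsub : passage x {x} {x} ⊆ passage x {x, y} {x, y} := by
        rintro ω ⟨h0, k, hk, -⟩
        have hex : ∃ i, ω (1 + i) ∈ ({x, y} : Set V) := ⟨k, Or.inl hk⟩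
        exact ⟨h0, Nat.find hex, Nat.find_spec hex, fun j hj => Nat.find_min hex hj⟩
      have hone : P x (passage x {x} {x}) = 1 := by
        rw [measure_passage (hP x) subset_rfl, ← measure_return (hP x)]
        exact h x
      calc (1 : ℝ≥0∞) = P x (passage x {x} {x}) := hone.symm
        _ ≤ P x (passage x {x, y} {x, y}) := measure_mono hsub
        _ = hitPos G.q {x, y} {x, y} x := measure_passage (hP x) subset_rfl
        _ = hitPos G.q {x, y} {y} x + hitPos G.q {x, y} {x} x := by rw [hitPos_pair _ hxy, add_comm]
    have := tendsto_target_of_add_eq_one hVn hq hqn hxy hsum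
    rwa [show 1 - hitPos G.q {x, y} {x} x = hitPos G.q {x, y} {y} x from ?_]
    rw [← hsum]
    exact ENNReal.add_sub_cancel_right (ne_top_of_le_ne_top ENNReal.one_ne_top (hsum ▸ le_add_self))
end

section
/- Let G = (V, c) be a transient, connected weighted graph which is not a subgraph of an infinite line. Then there exist vertices x, y, z ∈ V with x ≠ y such that (x, z, y) is a path in G (i.e. c(x,z) > 0 and c(z,y) > 0) and P_z[τ_x = τ_y = ∞] > 0. -/
/-!
Some vertex `z` has three distinct neighbours `a`, `b`, `c`. Indeed, an infinite connected graph
with at most two neighbours per vertex embeds into a line (`exists_embedding`), and a finite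
graph is recurrent.

By transience, the finite set `{a, b, c}` is left forever with positive probability from one
of its points, say `a` (`exists_returnProb_ne_one`). The walk from `z` may step to `a` and then
avoid `b` and `c` forever, so `(b, z, c)` is the required path.

To see that the finite set `F` is left forever, suppose that the walk returns to `F` almost surely
from each point of `F`. By irreducibility `F` is hit almost surely from everywhere. The probability
of hitting a fixed transient vertex `x₀` is superharmonic, so it attains its global minimum on `F`,
and by irreducibility it is constant, equal to its value `1` at `x₀`. Then `x₀` is recurrent.
Only the Markov property at time one enters (`markov`); it follows from the cylinder probabilities
since cylinders form a π-system generating the σ-algebra of a countable state space.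
-/

open MeasureTheory Filter Topology Classical
open scoped ENNReal

/-! ### Graphs with at most two neighbours per vertex -/

section Line

variable {V : Type} {R : V → V → Prop}

/-- In a graph with at most two neighbours per vertex, a bi-infinite walk without backtracking
is determined by its positions at times `0` and `1`. -/
lemma walk_unique (hsymm : ∀ x y, R x y → R y x)
    (h3 : ∀ z a b c, R z a → R z b → R z c → a = b ∨ a = c ∨ b = c)
    {z z' : ℤ → V} (hz : ∀ n, R (z n) (z (n + 1))) (hz' : ∀ n, R (z' n) (z' (n + 1)))
    (nz : ∀ n, z (n + 2) ≠ z n) (nz' : ∀ n, z' (n + 2) ≠ z' n)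
    (h0 : z 0 = z' 0) (h1 : z 1 = z' 1) (n : ℤ) : z n = z' n := by
  suffices h : z n = z' n ∧ z (n + 1) = z' (n + 1) from h.1
  induction n using Int.induction_on with
  | zero => exact ⟨h0, by simpa using h1⟩
  | succ k ih =>
    obtain ⟨e0, e1⟩ := ih
    refine ⟨e1, ?_⟩
    have a1 := hsymm _ _ (hz k)
    have a2 := hz (k + 1)
    have a3 := hz' (k + 1)
    rw [← e1] at a3
    have n1 := nz k
    have n2 := nz' k
    rw [show (k : ℤ) + 2 = k + 1 + 1 by ring] at n1 n2
    rcases h3 _ _ _ _ a1 a2 a3 with h | h | h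
    · exact absurd h.symm n1
    · exact absurd (h.symm.trans e0) n2
    · exact h
  | pred k ih =>
    obtain ⟨e0, e1⟩ := ih
    rw [show -(k : ℤ) - 1 + 1 = -k by ring]
    refine ⟨?_, e0⟩
    have a1 := hz (-k)
    have a2 := hsymm _ _ (hz (-k - 1))
    have a3 := hsymm _ _ (hz' (-k - 1))
    have n1 := nz (-k - 1)
    have n2 := nz' (-k - 1)
    rw [show -(k : ℤ) - 1 + 1 = -k by ring] at a2 a3
    rw [show -(k : ℤ) - 1 + 2 = -k + 1 by ring] at n1 n2
    rw [← e0] at a3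
    rcases h3 _ _ _ _ a1 a2 a3 with h | h | h
    · exact absurd h n1
    · exact absurd (e1.symm.trans h) n2
    · exact h

/-- A bi-infinite walk without backtracking in an infinite connected graph with at most two
neighbours per vertex is an isomorphism from `ℤ`: an orientation-preserving self-intersection
makes it periodic, hence its range finite, and an orientation-reversing one makes it fold back
at the midpoint. -/
lemma exists_embedding_of_walk [Infinite V] (hsymm : ∀ x y, R x y → R y x)
    (hirr : ∀ x, ¬ R x x) (hconn : ∀ x y, Relation.ReflTransGen R x y)
    (h3 : ∀ z a b c, R z a → R z b → R z c → a = b ∨ a = c ∨ b = c)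
    {z : ℤ → V} (hz : ∀ n, R (z n) (z (n + 1))) (nz : ∀ n, z (n + 2) ≠ z n) :
    ∃ f : V → ℤ, Function.Injective f ∧ ∀ x y, R x y → |f x - f y| = 1 := by
  have nb : ∀ n w, R (z n) w → w = z (n + 1) ∨ w = z (n - 1) := by
    intro n w hw
    have a1 := hsymm _ _ (hz (n - 1))
    have n1 := nz (n - 1)
    rw [show n - 1 + 1 = n by ring] at a1
    rw [show n - 1 + 2 = n + 1 by ring] at n1
    rcases h3 _ _ _ _ hw (hz n) a1 with h | h | h
    · exact Or.inl h
    · exact Or.inr h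
    · exact absurd h n1
  have surj : Function.Surjective z := by
    intro v
    induction hconn (z 0) v with
    | refl => exact ⟨0, rfl⟩
    | tail _ hw ih =>
      obtain ⟨n, rfl⟩ := ih
      rcases nb n _ hw with h | h
      · exact ⟨_, h.symm⟩
      · exact ⟨_, h.symm⟩
  have inj' : ∀ i j, i < j → z i ≠ z j := by
    intro i j hij e
    have hi := hz i
    rw [e] at hi
    rcases nb j _ hi with h | h
    · have per : ∀ n, z (i + n) = z (j + n) :=
        walk_unique hsymm h3 (z := fun n => z (i + n)) (z' := fun n => z (j + n))
          (fun n => by simpa [add_assoc] using hz (i + n))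
          (fun n => by simpa [add_assoc] using hz (j + n))
          (fun n => by simpa [add_assoc] using nz (i + n))
          (fun n => by simpa [add_assoc] using nz (j + n))
          (by simpa using e) h
      have hper : Function.Periodic z (j - i) := by
        intro n
        have := per (n - i)
        rw [show i + (n - i) = n by ring, show j + (n - i) = n + (j - i) by ring] at this
        exact this.symm
      have hfin : (Set.univ : Set V).Finite := by
        refine ((Set.finite_Ico (0 : ℤ) (j - i)).image z).subset ?_
        intro v _
        obtain ⟨n, rfl⟩ := surj v
        refine ⟨n % (j - i), ⟨Int.emod_nonneg _ (by omega), Int.emod_lt_of_pos _ (by omega)⟩, ?_⟩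
        have := hper.int_mul (n / (j - i)) (n % (j - i))
        rw [← this]
        congr 1
        have := Int.emod_add_mul_ediv n (j - i)
        push_cast
        linarith
      exact Set.infinite_univ hfin
    · have refl : ∀ n, z (i + n) = z (j - n) := by
        refine walk_unique hsymm h3 (z := fun n => z (i + n)) (z' := fun n => z (j - n))
          (fun n => by simpa [add_assoc] using hz (i + n)) (fun n => ?_)
          (fun n => by simpa [add_assoc] using nz (i + n)) (fun n => ?_)
          (by simpa using e) h
        · have := hsymm _ _ (hz (j - (n + 1)))
          rwa [show j - (n + 1) + 1 = j - n by ring] at this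
        · have := nz (j - (n + 2))
          rw [show j - (n + 2) + 2 = j - n by ring] at this
          exact this.symm
      rcases Int.even_or_odd' (j - i) with ⟨m, hm | hm⟩
      · have := refl (m - 1)
        rw [show j - (m - 1) = i + (m - 1) + 2 by omega] at this
        exact nz _ this.symm
      · have := refl m
        rw [show j - m = i + m + 1 by omega] at this
        have h' := hz (i + m)
        rw [← this] at h'
        exact hirr _ h'
  have inj : Function.Injective z := by
    intro i j e
    rcases lt_trichotomy i j with h | h | h
    · exact absurd e (inj' _ _ h)
    · exact h
    · exact absurd e.symm (inj' _ _ h)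
  refine ⟨(Equiv.ofBijective z ⟨inj, surj⟩).symm, Equiv.injective _, ?_⟩
  intro x y hxy
  obtain ⟨n, rfl⟩ := surj x
  have key : ∀ k, (Equiv.ofBijective z ⟨inj, surj⟩).symm (z k) = k :=
    Equiv.ofBijective_symm_apply_apply z ⟨inj, surj⟩
  rcases nb n y hxy with rfl | rfl <;> simp only [key] <;> simp

/-- If every vertex has two neighbours, following edges without backtracking is a permutation
of the oriented edges; iterating it in both directions gives a bi-infinite walk. -/
lemma exists_walk [Nonempty V] (hsymm : ∀ x y, R x y → R y x)
    (h3 : ∀ z a b c, R z a → R z b → R z c → a = b ∨ a = c ∨ b = c)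
    (h2 : ∀ z, ∃ a b, a ≠ b ∧ R z a ∧ R z b) :
    ∃ z : ℤ → V, (∀ n, R (z n) (z (n + 1))) ∧ ∀ n, z (n + 2) ≠ z n := by
  have hnx : ∀ u v, ∃ w, w ≠ u ∧ R v w := by
    intro u v
    obtain ⟨a, b, hab, ha, hb⟩ := h2 v
    by_cases h : a = u
    · exact ⟨b, fun h' => hab (h.trans h'.symm), hb⟩
    · exact ⟨a, h, ha⟩
  choose nx nx_ne nx_adj using hnx
  have nx_nx : ∀ u v, R v u → nx (nx u v) v = u := by
    intro u v huv
    rcases h3 v _ _ _ huv (nx_adj u v) (nx_adj (nx u v) v) with h | h | h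
    · exact absurd h.symm (nx_ne _ _)
    · exact h.symm
    · exact absurd h.symm (nx_ne _ _)
  let σ : Equiv.Perm {p : V × V // R p.1 p.2} :=
    { toFun := fun p => ⟨(p.1.2, nx p.1.1 p.1.2), nx_adj _ _⟩
      invFun := fun p => ⟨(nx p.1.2 p.1.1, p.1.1), hsymm _ _ (nx_adj _ _)⟩
      left_inv := by
        rintro ⟨⟨u, v⟩, h⟩
        simp only [Subtype.mk.injEq, Prod.mk.injEq, and_true]
        exact nx_nx _ _ (hsymm _ _ h)
      right_inv := by
        rintro ⟨⟨u, v⟩, h⟩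
        simp only [Subtype.mk.injEq, Prod.mk.injEq, true_and]
        exact nx_nx _ _ h }
  obtain ⟨r⟩ := ‹Nonempty V›
  obtain ⟨a, -, -, ha, -⟩ := h2 r
  let d : {p : V × V // R p.1 p.2} := ⟨(r, a), ha⟩
  have succ : ∀ n : ℤ, (σ ^ (n + 1)) d = σ ((σ ^ n) d) := by
    intro n
    rw [add_comm, zpow_add, zpow_one, Equiv.Perm.mul_apply]
  refine ⟨fun n => ((σ ^ n) d).1.1, fun n => ?_, fun n => ?_⟩
  · simp only [succ]
    exact ((σ ^ n) d).2
  · rw [show n + 2 = n + 1 + 1 by ring]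
    simp only [succ]
    exact nx_ne _ _

/-- If some vertex has at most one neighbour, the distance from it embeds the graph into a
half-line: by induction on the radius, every sphere around it has at most one point. -/
lemma exists_embedding_of_endpoint (hsymm : ∀ x y, R x y → R y x)
    (hirr : ∀ x, ¬ R x x) (hconn : ∀ x y, Relation.ReflTransGen R x y)
    (h3 : ∀ z a b c, R z a → R z b → R z c → a = b ∨ a = c ∨ b = c)
    (r : V) (hr : ∀ a b, R r a → R r b → a = b) :
    ∃ f : V → ℤ, Function.Injective f ∧ ∀ x y, R x y → |f x - f y| = 1 := by
  let S : SimpleGraph V := { Adj := R, symm := ⟨hsymm⟩, loopless := ⟨hirr⟩ }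
  have hS : S.Connected :=
    { preconnected := fun x y => (SimpleGraph.reachable_iff_reflTransGen x y).2 (hconn x y)
      nonempty := ⟨r⟩ }
  have pred : ∀ n v, S.dist r v = n + 1 → ∃ u, R u v ∧ S.dist r u = n := by
    intro n v hv
    obtain ⟨p, hp⟩ := hS.exists_walk_length_eq_dist v r
    rw [SimpleGraph.dist_comm, hv] at hp
    cases p with
    | nil => simp at hp
    | @cons _ u _ h q =>
      refine ⟨u, hsymm _ _ h, ?_⟩
      have h1 : S.dist u r ≤ n := (SimpleGraph.dist_le q).trans (by simp at hp; omega)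
      have h2 : S.dist v r ≤ S.dist v u + S.dist u r := hS.dist_triangle
      rw [SimpleGraph.dist_eq_one_iff_adj.2 h, SimpleGraph.dist_comm (u := v), hv] at h2
      rw [SimpleGraph.dist_comm]
      omega
  have uniq : ∀ n v v', S.dist r v = n → S.dist r v' = n → v = v' := by
    intro n
    induction n with
    | zero =>
      intro v v' h h'
      rw [hS.dist_eq_zero_iff] at h h'
      exact h.symm.trans h'
    | succ n ih =>
      intro v v' h h'
      obtain ⟨u, hu, hun⟩ := pred n v h
      obtain ⟨u', hu', hun'⟩ := pred n v' h'
      obtain rfl := ih u u' hun hun'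
      cases n with
      | zero =>
        rw [hS.dist_eq_zero_iff] at hun
        subst hun
        exact hr _ _ hu hu'
      | succ m =>
        obtain ⟨t, ht, htm⟩ := pred m u hun
        rcases h3 u v v' t hu hu' (hsymm _ _ ht) with e | e | e
        · exact e
        · subst e; omega
        · subst e; omega
  refine ⟨fun v => (S.dist r v : ℤ), fun v v' e => uniq _ v v' rfl (Int.ofNat_inj.1 e.symm), ?_⟩
  intro x y hxy
  have a1 : S.dist r x ≤ S.dist r y + S.dist y x := hS.dist_triangle
  have a2 : S.dist r y ≤ S.dist r x + S.dist x y := hS.dist_triangle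
  rw [SimpleGraph.dist_eq_one_iff_adj.2 (show S.Adj y x from hsymm _ _ hxy)] at a1
  rw [SimpleGraph.dist_eq_one_iff_adj.2 (show S.Adj x y from hxy)] at a2
  have a3 : S.dist r x ≠ S.dist r y := fun e => by
    obtain rfl := uniq _ x y rfl e.symm
    exact hirr _ hxy
  simp only
  rw [abs_eq (by norm_num)]
  omega

lemma exists_embedding [Infinite V] (hsymm : ∀ x y, R x y → R y x)
    (hirr : ∀ x, ¬ R x x) (hconn : ∀ x y, Relation.ReflTransGen R x y)
    (h3 : ∀ z a b c, R z a → R z b → R z c → a = b ∨ a = c ∨ b = c) :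
    ∃ f : V → ℤ, Function.Injective f ∧ ∀ x y, R x y → |f x - f y| = 1 := by
  by_cases h2 : ∀ z, ∃ a b, a ≠ b ∧ R z a ∧ R z b
  · obtain ⟨z, hz, nz⟩ := exists_walk hsymm h3 h2
    exact exists_embedding_of_walk hsymm hirr hconn h3 hz nz
  · push Not at h2
    obtain ⟨r, hr⟩ := h2
    refine exists_embedding_of_endpoint hsymm hirr hconn h3 r fun a b ha hb => ?_
    by_contra hab
    exact hr a b hab ha hb

end Line

/-! ### The Markov property and hitting probabilities -/

section Walk

variable {V : Type}

attribute [local instance] trajMS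

lemma measurable_coord (k : ℕ) : @Measurable (ℕ → V) V _ ⊤ (fun ω => ω k) :=
  @measurable_pi_apply ℕ (fun _ => V) (fun _ => ⊤) k

lemma measurableSet_coord (k : ℕ) (A : Set V) : MeasurableSet {ω : ℕ → V | ω k ∈ A} :=
  measurable_coord k (MeasurableSpace.measurableSet_top (s := A))

lemma measurable_shift : Measurable (fun (ω : ℕ → V) k => ω (k + 1)) :=
  @measurable_pi_lambda (ℕ → V) ℕ (fun _ => V) _ (fun _ => ⊤) _
    fun k => measurable_coord (k + 1)

lemma measurableSet_hit (A : Set V) : MeasurableSet {ω : ℕ → V | ∃ k, ω k ∈ A} := by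
  have : {ω : ℕ → V | ∃ k, ω k ∈ A} = ⋃ k, {ω | ω k ∈ A} := by ext; simp
  rw [this]
  exact MeasurableSet.iUnion fun k => measurableSet_coord k A

lemma measurableSet_hit_le (A : Set V) (n : ℕ) :
    MeasurableSet {ω : ℕ → V | ∃ k ≤ n, ω k ∈ A} := by
  have : {ω : ℕ → V | ∃ k ≤ n, ω k ∈ A} = ⋃ k, ⋃ _ : k ≤ n, {ω | ω k ∈ A} := by ext; simp
  rw [this]
  exact MeasurableSet.iUnion fun k => MeasurableSet.iUnion fun _ => measurableSet_coord k A

/-- The cylinder sets on which `IsRandomWalk` prescribes the measure. -/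
def cylinders (V : Type) : Set (Set (ℕ → V)) :=
  {s | ∃ (n : ℕ) (f : ℕ → V), s = {ω | ∀ k ≤ n, ω k = f k}}

lemma measurableSet_cylinder (n : ℕ) (f : ℕ → V) :
    MeasurableSet {ω : ℕ → V | ∀ k ≤ n, ω k = f k} := by
  have : {ω : ℕ → V | ∀ k ≤ n, ω k = f k} = ⋂ k, ⋂ _ : k ≤ n, {ω | ω k ∈ ({f k} : Set V)} := by
    ext; simp
  rw [this]
  exact MeasurableSet.iInter fun k => MeasurableSet.iInter fun _ => measurableSet_coord k _

lemma isPiSystem_cylinders : IsPiSystem (cylinders V) := by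
  rintro _ ⟨n, f, rfl⟩ _ ⟨m, g, rfl⟩ ⟨ω, hf, hg⟩
  refine ⟨max n m, ω, ?_⟩
  ext ω'
  simp only [Set.mem_inter_iff, Set.mem_ofPred_eq] at hf hg ⊢
  constructor
  · rintro ⟨h1, h2⟩ k hk
    rcases le_max_iff.1 hk with h | h
    · rw [h1 k h, hf k h]
    · rw [h2 k h, hg k h]
  · intro h
    exact ⟨fun k hk => by rw [h k (le_max_of_le_left hk), hf k hk],
      fun k hk => by rw [h k (le_max_of_le_right hk), hg k hk]⟩

lemma generateFrom_cylinders [Countable V] [Nonempty V] :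
    trajMS V = MeasurableSpace.generateFrom (cylinders V) := by
  apply le_antisymm
  · refine iSup_le fun k => ?_
    rintro _ ⟨s, -, rfl⟩
    obtain ⟨v⟩ := ‹Nonempty V›
    -- Decompose along the countably many possible initial segments of length `k + 1`.
    let F : (Fin (k + 1) → V) → ℕ → V := fun g i => if h : i < k + 1 then g ⟨i, h⟩ else v
    have : (fun ω : ℕ → V => ω k) ⁻¹' s
        = ⋃ g : Fin (k + 1) → V, ⋃ _ : F g k ∈ s, {ω | ∀ i ≤ k, ω i = F g i} := by
      ext ω
      simp only [Set.mem_preimage, Set.mem_iUnion, Set.mem_ofPred_eq, exists_prop]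
      constructor
      · intro h
        refine ⟨fun i => ω i, by simpa [F] using h, fun i hi => ?_⟩
        have hi' : i < k + 1 := by omega
        simp only [F, dif_pos hi']
      · rintro ⟨g, hg, h⟩
        rwa [h k le_rfl]
    rw [this]
    exact MeasurableSet.iUnion fun g => MeasurableSet.iUnion fun _ =>
      MeasurableSpace.measurableSet_generateFrom ⟨k, _, rfl⟩
  · refine MeasurableSpace.generateFrom_le ?_
    rintro _ ⟨n, f, rfl⟩
    exact measurableSet_cylinder n f

variable {p : V → V → ℝ} {P : V → TrajMeasure V}

lemma ae_start (hP : ∀ x, IsRandomWalk p x (P x)) (v : V) : ∀ᵐ ω ∂(P v), ω 0 = v := by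
  have : IsProbabilityMeasure (P v) := ⟨(hP v).1⟩
  have h := (hP v).2 0 (fun _ => v)
  simp only [Finset.range_zero, Finset.prod_empty, if_true, mul_one] at h
  have h' := (mem_ae_iff_prob_eq_one (measurableSet_cylinder 0 fun _ => v)).2 h
  filter_upwards [h'] with ω hω
  exact hω 0 le_rfl

/-- The Markov property at time one. -/
lemma markov [Countable V] (hP : ∀ x, IsRandomWalk p x (P x))
    (hp : ∀ v, ∑' w, ENNReal.ofReal (p v w) = 1) (v : V)
    {E : Set (ℕ → V)} (hE : MeasurableSet E) :
    P v {ω | (fun k => ω (k + 1)) ∈ E} = ∑' w, ENNReal.ofReal (p v w) * P w E := by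
  have : Nonempty V := ⟨v⟩
  have hprob : ∀ v, IsProbabilityMeasure (P v) := fun v => ⟨(hP v).1⟩
  let μ : TrajMeasure V := (P v).map (fun ω k => ω (k + 1))
  let ν : TrajMeasure V := Measure.sum fun w => ENNReal.ofReal (p v w) • P w
  have hμ : ∀ {s : Set (ℕ → V)}, MeasurableSet s →
      μ s = P v {ω | (fun k => ω (k + 1)) ∈ s} := fun hs => Measure.map_apply measurable_shift hs
  have hν : ∀ {s : Set (ℕ → V)}, MeasurableSet s →
      ν s = ∑' w, ENNReal.ofReal (p v w) * P w s := fun hs => by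
    simp [ν, Measure.sum_apply _ hs]
  have hμfin : IsProbabilityMeasure μ :=
    Measure.isProbabilityMeasure_map measurable_shift.aemeasurable
  have hμν : μ = ν := by
    refine ext_of_generate_finite (cylinders V) generateFrom_cylinders isPiSystem_cylinders ?_ ?_
    · rintro _ ⟨n, f, rfl⟩
      rw [hμ (measurableSet_cylinder n f), hν (measurableSet_cylinder n f)]
      let g : ℕ → V := fun k => Nat.casesOn k v f
      have e1 : P v {ω | (fun k => ω (k + 1)) ∈ {ω : ℕ → V | ∀ k ≤ n, ω k = f k}}
          = P v {ω | ∀ k ≤ n + 1, ω k = g k} := by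
        apply measure_congr
        filter_upwards [ae_start hP v] with ω hω
        apply propext
        constructor
        · intro h k hk
          cases k with
          | zero => exact hω
          | succ k => exact h k (by omega)
        · intro h k hk
          exact h (k + 1) (by omega)
      rw [e1, (hP v).2, Finset.prod_range_succ', tsum_eq_single (f 0)]
      · rw [(hP (f 0)).2]
        simp [g, mul_comm]
      · intro w hw
        rw [(hP w).2, if_neg hw.symm]
        simp
    · rw [measure_univ, hν MeasurableSet.univ]
      simp [hp]
  rw [← hμ hE, ← hν hE, hμν]

/-- The probability, started at `v`, of visiting `A` at some time `k ≥ 0`. -/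
def hitProb (P : V → TrajMeasure V) (A : Set V) (v : V) : ℝ≥0∞ := P v {ω | ∃ k, ω k ∈ A}

/-- The probability, started at `v`, of visiting `A` at some time `k ≥ 1`. -/
def returnProb (P : V → TrajMeasure V) (A : Set V) (v : V) : ℝ≥0∞ := P v {ω | ∃ k, ω (k + 1) ∈ A}

lemma hitProb_le_one (hP : ∀ x, IsRandomWalk p x (P x)) (A : Set V) (v : V) :
    hitProb P A v ≤ 1 := by
  have : IsProbabilityMeasure (P v) := ⟨(hP v).1⟩
  exact prob_le_one

lemma hitProb_of_mem (hP : ∀ x, IsRandomWalk p x (P x)) {A : Set V} {v : V} (hv : v ∈ A) :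
    hitProb P A v = 1 := by
  have : IsProbabilityMeasure (P v) := ⟨(hP v).1⟩
  refine (mem_ae_iff_prob_eq_one (measurableSet_hit A)).1 ?_
  filter_upwards [ae_start hP v] with ω hω
  exact ⟨0, by rwa [hω]⟩

lemma returnProb_eq_tsum [Countable V] (hP : ∀ x, IsRandomWalk p x (P x))
    (hp : ∀ v, ∑' w, ENNReal.ofReal (p v w) = 1) (A : Set V) (v : V) :
    returnProb P A v = ∑' w, ENNReal.ofReal (p v w) * hitProb P A w :=
  markov hP hp v (measurableSet_hit A)

lemma returnProb_le_hitProb (A : Set V) (v : V) : returnProb P A v ≤ hitProb P A v :=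
  measure_mono fun _ ⟨k, hk⟩ => ⟨k + 1, hk⟩

lemma hitProb_of_notMem (hP : ∀ x, IsRandomWalk p x (P x)) {A : Set V} {v : V} (hv : v ∉ A) :
    hitProb P A v = returnProb P A v := by
  refine measure_congr ?_
  filter_upwards [ae_start hP v] with ω hω
  apply propext
  constructor
  · rintro ⟨k, hk⟩
    cases k with
    | zero => exact absurd (hω ▸ hk) hv
    | succ k => exact ⟨k, hk⟩
  · rintro ⟨k, hk⟩
    exact ⟨k + 1, hk⟩

/-- Minimum principle: a superharmonic function which is at least `m` on `F` is at least
`m` times the probability of hitting `F`. -/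
lemma mul_hitProb_le [Countable V] (hP : ∀ x, IsRandomWalk p x (P x))
    (hp : ∀ v, ∑' w, ENNReal.ofReal (p v w) = 1) {h : V → ℝ≥0∞}
    (hh : ∀ v, ∑' w, ENNReal.ofReal (p v w) * h w ≤ h v) {F : Set V} {m : ℝ≥0∞}
    (hm : ∀ v ∈ F, m ≤ h v) (v : V) : m * hitProb P F v ≤ h v := by
  have hprob : ∀ v, IsProbabilityMeasure (P v) := fun v => ⟨(hP v).1⟩
  have key : ∀ n v, m * P v {ω | ∃ k ≤ n, ω k ∈ F} ≤ h v := by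
    intro n
    induction n with
    | zero =>
      intro v
      by_cases hv : v ∈ F
      · exact (mul_le_of_le_one_right' prob_le_one).trans (hm v hv)
      · have : P v {ω | ∃ k ≤ 0, ω k ∈ F} = 0 := by
          rw [measure_eq_zero_iff_ae_notMem]
          filter_upwards [ae_start hP v] with ω hω
          rintro ⟨k, hk, hk'⟩
          obtain rfl : k = 0 := by omega
          exact hv (hω ▸ hk')
        rw [this, mul_zero]
        exact zero_le
    | succ n ih =>
      intro v
      by_cases hv : v ∈ F
      · exact (mul_le_of_le_one_right' prob_le_one).trans (hm v hv)
      · have e : P v {ω | ∃ k ≤ n + 1, ω k ∈ F}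
            = P v {ω | (fun k => ω (k + 1)) ∈ {ω : ℕ → V | ∃ k ≤ n, ω k ∈ F}} := by
          refine measure_congr ?_
          filter_upwards [ae_start hP v] with ω hω
          apply propext
          constructor
          · rintro ⟨k, hk, hk'⟩
            cases k with
            | zero => exact absurd (hω ▸ hk') hv
            | succ k => exact ⟨k, by omega, hk'⟩
          · rintro ⟨k, hk, hk'⟩
            exact ⟨k + 1, by omega, hk'⟩
        rw [e, markov hP hp v (measurableSet_hit_le F n), ← ENNReal.tsum_mul_left]
        refine le_trans (ENNReal.tsum_le_tsum fun w => ?_) (hh v)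
        rw [mul_left_comm]
        exact mul_le_mul_right (ih w) _
  have hU : {ω : ℕ → V | ∃ k, ω k ∈ F} = ⋃ n, {ω | ∃ k ≤ n, ω k ∈ F} := by
    ext ω
    simp only [Set.mem_ofPred_eq, Set.mem_iUnion]
    exact ⟨fun ⟨k, hk⟩ => ⟨k, k, le_rfl, hk⟩, fun ⟨_, k, _, hk⟩ => ⟨k, hk⟩⟩
  have hmono : Monotone fun n : ℕ => {ω : ℕ → V | ∃ k ≤ n, ω k ∈ F} :=
    fun a b hab _ ⟨k, hk, hk'⟩ => ⟨k, hk.trans hab, hk'⟩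
  rw [hitProb, hU, hmono.measure_iUnion, ENNReal.mul_iSup]
  exact iSup_le fun n => key n v

lemma eq_of_average_le {q a : V → ℝ≥0∞} {m : ℝ≥0∞} (hq : ∑' w, q w = 1) (hm : m ≠ ⊤)
    (ha : ∀ w, m ≤ a w) (h : ∑' w, q w * a w ≤ m) {w : V} (hw : q w ≠ 0) : a w = m := by
  by_contra hne
  have hqt : q w ≠ ⊤ := ne_top_of_le_ne_top ENNReal.one_ne_top (hq ▸ ENNReal.le_tsum w)
  have e : ∑' w, q w * m = m := by rw [ENNReal.tsum_mul_right, hq, one_mul]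
  have := ENNReal.tsum_lt_tsum (f := fun w => q w * m) (g := fun w => q w * a w) (i := w)
    (by rw [e]; exact hm) (fun w => mul_le_mul_right (ha w) _)
    (by exact (ENNReal.mul_lt_mul_iff_right hw hqt).2 (lt_of_le_of_ne (ha w) (Ne.symm hne)))
  rw [e] at this
  exact absurd h (not_le.2 this)

lemma eq_one_of_average {q a : V → ℝ≥0∞} (hq : ∑' w, q w = 1)
    (ha : ∀ w, a w ≤ 1) (h : ∑' w, q w * a w = 1) {w : V} (hw : q w ≠ 0) : a w = 1 := by
  by_contra hne
  have hqt : q w ≠ ⊤ := ne_top_of_le_ne_top ENNReal.one_ne_top (hq ▸ ENNReal.le_tsum w)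
  have := ENNReal.tsum_lt_tsum (f := fun w => q w * a w) (g := fun w => q w * 1) (i := w)
    (by rw [h]; exact ENNReal.one_ne_top) (fun w => mul_le_mul_right (ha w) _)
    (by exact (ENNReal.mul_lt_mul_iff_right hw hqt).2 (lt_of_le_of_ne (ha w) hne))
  simp [h, hq] at this

/-- In an irreducible chain with a transient state `x₀`, every finite nonempty set is left
forever with positive probability from one of its points. Otherwise it is hit almost surely
from everywhere, so by the minimum principle the superharmonic function `hitProb P {x₀}` attains
its global minimum on it. Hence that function is constant, equal to `1`, and `x₀` is recurrent. -/
lemma exists_returnProb_ne_one [Countable V] (hP : ∀ x, IsRandomWalk p x (P x))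
    (hp : ∀ v, ∑' w, ENNReal.ofReal (p v w) = 1)
    (hconn : ∀ x y, Relation.ReflTransGen (fun a b => ENNReal.ofReal (p a b) ≠ 0) x y)
    {x₀ : V} (hx₀ : returnProb P {x₀} x₀ ≠ 1) (F : Finset V) (hF : F.Nonempty) :
    ∃ v ∈ F, returnProb P (F : Set V) v ≠ 1 := by
  by_contra! hrec
  obtain ⟨u, huF, hu⟩ := F.exists_min_image (hitProb P {x₀}) hF
  have hhit : ∀ v, hitProb P (F : Set V) v = 1 := by
    intro v
    induction hconn u v with
    | refl => exact hitProb_of_mem hP huF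
    | @tail v w _ hvw ih =>
      have hv : returnProb P (F : Set V) v = 1 := by
        by_cases hvF : v ∈ F
        · exact hrec v hvF
        · rw [← hitProb_of_notMem hP (by simpa using hvF), ih]
      rw [returnProb_eq_tsum hP hp] at hv
      exact eq_one_of_average (hp v) (hitProb_le_one hP _) hv hvw
  have hsuper : ∀ v, ∑' w, ENNReal.ofReal (p v w) * hitProb P {x₀} w ≤ hitProb P {x₀} v := by
    intro v
    rw [← returnProb_eq_tsum hP hp]
    exact returnProb_le_hitProb _ _
  have hmin : ∀ v, hitProb P {x₀} u ≤ hitProb P {x₀} v := by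
    intro v
    have := mul_hitProb_le hP hp hsuper (F := F) hu v
    rwa [hhit, mul_one] at this
  have hconst : ∀ v, hitProb P {x₀} v = hitProb P {x₀} u := by
    intro v
    induction hconn u v with
    | refl => rfl
    | @tail v w _ hvw ih =>
      exact eq_of_average_le (hp v) (ne_top_of_le_ne_top ENNReal.one_ne_top (hitProb_le_one hP _ _))
        hmin (ih ▸ hsuper v) hvw
  have hone : ∀ v, hitProb P {x₀} v = 1 := by
    intro v
    rw [hconst v, ← hconst x₀]
    exact hitProb_of_mem hP rfl
  apply hx₀
  rw [returnProb_eq_tsum hP hp]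
  simp [hone, hp]

lemma hitTime_eq_top (x : V) (ω : ℕ → V) : hitTime {x} ω = ⊤ ↔ ∀ k, ω k ≠ x := by
  rw [hitTime, sInf_eq_top]
  simp only [Set.mem_ofPred_eq, Set.mem_singleton_iff]
  constructor
  · intro h k hk
    exact ENat.natCast_ne_top k (h _ ⟨k, rfl, hk⟩)
  · rintro h _ ⟨k, -, hk⟩
    exact absurd hk (h k)

lemma hitTime1_lt_top (x : V) (ω : ℕ → V) : hitTime1 {x} ω < ⊤ ↔ ∃ k, ω (k + 1) = x := by
  rw [lt_top_iff_ne_top, Ne, hitTime1, sInf_eq_top]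
  simp only [Set.mem_ofPred_eq, Set.mem_singleton_iff]
  constructor
  · intro h
    by_contra! h'
    refine h ?_
    rintro _ ⟨k, hk, rfl, hk'⟩
    obtain ⟨j, rfl⟩ := Nat.exists_eq_add_of_le' hk
    exact absurd hk' (h' j)
  · rintro ⟨k, hk⟩ h
    exact ENat.natCast_ne_top (k + 1) (h _ ⟨k + 1, by omega, rfl, hk⟩)

/-- Step from `z` to `a`, then leave the set `{a, b, c}` forever. -/
lemma escape_of_returnProb_ne_one [Countable V] (hP : ∀ x, IsRandomWalk p x (P x))
    (hp : ∀ v, ∑' w, ENNReal.ofReal (p v w) = 1) {F : Set V} {z a b c : V}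
    (hza : ENNReal.ofReal (p z a) ≠ 0) (hzb : z ≠ b) (hzc : z ≠ c) (hab : a ≠ b) (hac : a ≠ c)
    (hb : b ∈ F) (hc : c ∈ F) (ha : returnProb P F a ≠ 1) :
    0 < P z {ω | hitTime {b} ω = ⊤ ∧ hitTime {c} ω = ⊤} := by
  have hprob : ∀ v, IsProbabilityMeasure (P v) := fun v => ⟨(hP v).1⟩
  have hmeas : MeasurableSet {ω : ℕ → V | ∃ k, ω k ∈ ({b, c} : Set V)}ᶜ :=
    (measurableSet_hit _).compl
  have hpos : P a {ω : ℕ → V | ∃ k, ω k ∈ ({b, c} : Set V)}ᶜ ≠ 0 := by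
    intro h0
    rw [prob_compl_eq_zero_iff (measurableSet_hit _)] at h0
    have h1 : hitProb P {b, c} a ≤ returnProb P F a := by
      rw [hitProb_of_notMem hP (by simp [hab, hac])]
      refine measure_mono fun ω ⟨k, hk⟩ => ⟨k, ?_⟩
      rcases hk with h | h
      · rw [h]; exact hb
      · rw [h]; exact hc
    rw [hitProb, h0] at h1
    exact ha (le_antisymm prob_le_one h1)
  have e : P z {ω | hitTime {b} ω = ⊤ ∧ hitTime {c} ω = ⊤}
      = P z {ω | (fun k => ω (k + 1)) ∈ {ω : ℕ → V | ∃ k, ω k ∈ ({b, c} : Set V)}ᶜ} := by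
    refine measure_congr ?_
    filter_upwards [ae_start hP z] with ω hω
    apply propext
    change (hitTime {b} ω = ⊤ ∧ hitTime {c} ω = ⊤) ↔ ¬ ∃ k, ω (k + 1) ∈ ({b, c} : Set V)
    rw [hitTime_eq_top, hitTime_eq_top]
    constructor
    · rintro ⟨h1, h2⟩ ⟨k, hk | hk⟩
      · exact h1 _ hk
      · exact h2 _ hk
    · intro h
      refine ⟨fun k hk => ?_, fun k hk => ?_⟩ <;> cases k with
      | zero => first | exact hzb (hω.symm.trans hk) | exact hzc (hω.symm.trans hk)
      | succ k => exact h ⟨k, by simp [hk]⟩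
  rw [e, markov hP hp z hmeas]
  exact lt_of_lt_of_le (pos_iff_ne_zero.2 (mul_ne_zero hza hpos)) (ENNReal.le_tsum a)

end Walk

/-! ### Combining the two parts -/

namespace WeightedGraph

variable {V : Type} (G : WeightedGraph V)

lemma isSubgraphOfLine_of_subsingleton [Subsingleton V] : G.IsSubgraphOfLine := by
  refine ⟨fun _ => 0, fun x y _ => Subsingleton.elim x y, fun x y h => ?_⟩
  rw [Subsingleton.elim y x, G.loopless] at h
  exact absurd h (lt_irrefl _)

lemma deg_pos_s4 [Nontrivial V] (hconn : G.Connected) (v : V) : 0 < G.deg v := by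
  obtain ⟨u, hu⟩ := exists_ne v
  rcases Relation.ReflTransGen.cases_head (hconn v u) with h | ⟨w, hw, -⟩
  · exact absurd h.symm hu
  · exact (G.row_summable v).tsum_pos (G.nonneg v) w hw

lemma tsum_trans [Nontrivial V] (hconn : G.Connected) (v : V) :
    ∑' w, ENNReal.ofReal (G.trans v w) = 1 := by
  have hd := G.deg_pos_s4 hconn v
  simp only [trans]
  rw [← ENNReal.ofReal_tsum_of_nonneg (fun w => div_nonneg (G.nonneg v w) hd.le)
    ((G.row_summable v).div_const _)]
  rw [tsum_div_const, ← deg, div_self hd.ne', ENNReal.ofReal_one]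

lemma trans_ne_zero [Nontrivial V] (hconn : G.Connected) {v w : V} (h : 0 < G.c v w) :
    ENNReal.ofReal (G.trans v w) ≠ 0 :=
  (ENNReal.ofReal_pos.2 (div_pos h (G.deg_pos_s4 hconn v))).ne'

end WeightedGraph

/-- If `G` is a transient, connected weighted graph which is not a
subgraph of an infinite line, then there are vertices `x ≠ y` and `z` such that
`(x, z, y)` is a path in `G` and `P_z[τ_x = τ_y = ∞] > 0`. -/
theorem exists_path_with_positive_escape_prob
    {V : Type} [Countable V] (G : WeightedGraph V) (hconn : G.Connected)
    (P : V → TrajMeasure V) (hP : ∀ x : V, IsRandomWalk G.trans x (P x))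
    (htrans : ¬ IsRecurrentFamily P)
    (hline : ¬ G.IsSubgraphOfLine) :
    ∃ x y z : V, x ≠ y ∧ 0 < G.c x z ∧ 0 < G.c z y ∧
      0 < P z {ω | hitTime {x} ω = ⊤ ∧ hitTime {y} ω = ⊤} := by
  have hV : Nontrivial V := by
    by_contra h
    rw [not_nontrivial_iff_subsingleton] at h
    exact hline G.isSubgraphOfLine_of_subsingleton
  have hp := G.tsum_trans hconn
  have hirred : ∀ x y,
      Relation.ReflTransGen (fun a b => ENNReal.ofReal (G.trans a b) ≠ 0) x y :=
    fun x y => Relation.ReflTransGen.mono (fun _ _ h => G.trans_ne_zero hconn h) _ _ (hconn x y)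
  obtain ⟨x₀, hx₀⟩ : ∃ x₀, returnProb P {x₀} x₀ ≠ 1 := by
    unfold IsRecurrentFamily at htrans
    push Not at htrans
    obtain ⟨x₀, h⟩ := htrans
    refine ⟨x₀, fun h' => h ?_⟩
    rw [← h', returnProb]
    simp only [hitTime1_lt_top, Set.mem_singleton_iff]
  have htransient := exists_returnProb_ne_one hP hp hirred hx₀
  -- A finite `V` cannot be left, so transience forces `V` to be infinite.
  have hinf : Infinite V := by
    by_contra h
    rw [not_infinite_iff_finite] at h
    have := Fintype.ofFinite V
    obtain ⟨v, -, hv⟩ := htransient Finset.univ Finset.univ_nonempty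
    apply hv
    rw [← (hP v).1, returnProb]
    simp
  obtain ⟨z, a, b, c, ha, hb, hc, hab, hac, hbc⟩ : ∃ z a b c, 0 < G.c z a ∧ 0 < G.c z b ∧
      0 < G.c z c ∧ a ≠ b ∧ a ≠ c ∧ b ≠ c := by
    by_contra! h
    refine hline (exists_embedding (R := fun x y => 0 < G.c x y)
      (fun x y h => by rwa [G.symm y x]) (fun x => by simp [G.loopless]) hconn
      fun z a b c ha hb hc => ?_)
    by_contra! h'
    exact h'.2.2 (h z a b c ha hb hc h'.1 h'.2.1)
  have hne : ∀ {w}, 0 < G.c z w → z ≠ w := by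
    rintro w hw rfl
    rw [G.loopless] at hw
    exact lt_irrefl _ hw
  obtain ⟨v, hv, hret⟩ := htransient {a, b, c} (by simp)
  simp only [Finset.mem_insert, Finset.mem_singleton] at hv
  rcases hv with rfl | rfl | rfl
  · exact ⟨b, c, z, hbc, G.symm z b ▸ hb, hc, escape_of_returnProb_ne_one hP hp
      (G.trans_ne_zero hconn ha) (hne hb) (hne hc) hab hac (by simp) (by simp) hret⟩
  · exact ⟨a, c, z, hac, G.symm z a ▸ ha, hc, escape_of_returnProb_ne_one hP hp
      (G.trans_ne_zero hconn hb) (hne ha) (hne hc) hab.symm hbc (by simp) (by simp) hret⟩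
  · exact ⟨a, b, z, hab, G.symm z a ▸ ha, hb, escape_of_returnProb_ne_one hP hp
      (G.trans_ne_zero hconn hc) (hne ha) (hne hb) hac.symm hbc.symm (by simp) (by simp) hret⟩
end

section
/- Let G = (V, c) be an infinite, connected weighted graph with a finite exhaustion (V_n). For all n and all x, y ∈ V_n with x ≠ y, one has P̄^n_x[τ_y < τ_x⁺] = ((c_n)_x / c_x) · P^n_x[τ_y < τ_x⁺]. -/
/-! For a transition matrix `p`, let `h(u)` be the probability to hit `y` before `x` from `u`. It is
the sum over all first passage paths (`hitBefore`), hence the least nonnegative function which is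
harmonic off `{x, y}` and equals `1` at `y` (`hitBefore_harmonic`, `hitBefore_le`), and the escape
probability from `x` is `∑ v, p(x, v) h(v)` (`IsRandomWalk.measure_escape`).

A step of the extended walk from `u` is, with probability `(cₙ)_u / c_u`, a step of the induced walk,
and otherwise a step to the copy of `u`, from which the walk returns to `u`. Hence the extended
hitting probability, restricted to the original vertices, is harmonic for the induced walk; and the
induced one, extended to each copy by its value at the original vertex, is harmonic for the extended
walk. By minimality the two agree on the original vertices
(`WeightedGraph.hitBefore_extTrans_inl`). In the first step from `x`, going to the copy of `x` forces
a return to `x` before `y` is hit, so only the factor `(cₙ)_x / c_x` remains. -/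


open MeasureTheory Filter Topology Classical
open scoped ENNReal

/-! ### First passage sums of a transition matrix -/

/-- The total weight, under the transition matrix `p`, of the paths of length `k` which start at `u`,
end at `y`, and avoid both `x` and `y` at all times before `k`. -/
noncomputable def firstPassage {S : Type} (p : S → S → ℝ) (x y : S) : ℕ → S → ℝ≥0∞
  | 0, u => if u = y then 1 else 0
  | k + 1, u => if u = x ∨ u = y then 0 else
      ∑' v, ENNReal.ofReal (p u v) * firstPassage p x y k v

/-- The probability to hit `y` before `x` from `u` (both counted from time zero on), as the sum of
`firstPassage` over all path lengths. -/
noncomputable def hitBefore {S : Type} (p : S → S → ℝ) (x y u : S) : ℝ≥0∞ :=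
  ∑' k, firstPassage p x y k u

theorem hitBefore_target {S : Type} (p : S → S → ℝ) (x y : S) : hitBefore p x y y = 1 := by
  unfold hitBefore
  rw [tsum_eq_single 0]
  · simp [firstPassage]
  · intro k hk
    obtain ⟨k, rfl⟩ := Nat.exists_eq_succ_of_ne_zero hk
    simp [firstPassage]

theorem hitBefore_avoid {S : Type} (p : S → S → ℝ) {x y : S} (h : x ≠ y) :
    hitBefore p x y x = 0 := by
  unfold hitBefore
  rw [ENNReal.tsum_eq_zero]
  intro k
  cases k <;> simp [firstPassage, h]

theorem tsum_mul_hitBefore {S : Type} (p : S → S → ℝ) (x y u : S) :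
    ∑' v, ENNReal.ofReal (p u v) * hitBefore p x y v =
      ∑' k, ∑' v, ENNReal.ofReal (p u v) * firstPassage p x y k v := by
  rw [ENNReal.tsum_comm]
  exact tsum_congr fun v => ENNReal.tsum_mul_left.symm

/-- `hitBefore p x y` is harmonic off `{x, y}`. -/
theorem hitBefore_harmonic {S : Type} (p : S → S → ℝ) {x y u : S} (hx : u ≠ x) (hy : u ≠ y) :
    hitBefore p x y u = ∑' v, ENNReal.ofReal (p u v) * hitBefore p x y v := by
  rw [tsum_mul_hitBefore]
  unfold hitBefore
  rw [tsum_eq_zero_add' ENNReal.summable]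
  simp [firstPassage, hx, hy]

/-- `hitBefore p x y` is the least nonnegative function which is superharmonic off `{x, y}` and at
least `1` at `y`. -/
theorem hitBefore_le {S : Type} (p : S → S → ℝ) (x y : S) (F : S → ℝ≥0∞) (hy : 1 ≤ F y)
    (hF : ∀ u, u ≠ x → u ≠ y → ∑' v, ENNReal.ofReal (p u v) * F v ≤ F u) (u : S) :
    hitBefore p x y u ≤ F u := by
  unfold hitBefore
  rw [ENNReal.tsum_eq_iSup_nat]
  refine iSup_le fun K => ?_
  induction K generalizing u with
  | zero => simp
  | succ K ih =>
    rw [Finset.sum_range_succ']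
    by_cases h1 : u = y
    · subst h1; simpa [firstPassage] using hy
    by_cases h2 : u = x
    · simp [firstPassage, h2, h2 ▸ h1]
    · simp only [firstPassage, h1, h2, or_self, if_false, add_zero]
      refine le_trans ?_ (hF u h2 h1)
      rw [← Summable.tsum_finsetSum fun _ _ => ENNReal.summable]
      refine ENNReal.tsum_le_tsum fun v => ?_
      rw [← Finset.mul_sum]
      gcongr
      exact ih v

/-! ### Escape probabilities of a Markov chain as first passage sums -/

/-- Markov property for the cylinder `{ω | ω = f on {0, …, m}}`: from time `m` on, the first passage
to `y` happens after exactly `k` further steps. -/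
theorem measure_cylinder_firstPassage {S : Type} [Countable S] [MeasurableSpace S]
    [DiscreteMeasurableSpace S] (μ : Measure (ℕ → S)) (p : S → S → ℝ) (x₀ x y : S)
    (hμ : ∀ (n : ℕ) (f : ℕ → S), μ {ω | ∀ k ≤ n, ω k = f k} =
        (if f 0 = x₀ then 1 else 0) *
          ∏ k ∈ Finset.range n, ENNReal.ofReal (p (f k) (f (k + 1))))
    (k m : ℕ) (f : ℕ → S) :
    μ {ω | (∀ i ≤ m, ω i = f i) ∧ (∀ j < k, ω (m + j) ≠ x ∧ ω (m + j) ≠ y) ∧ ω (m + k) = y} =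
      μ {ω | ∀ i ≤ m, ω i = f i} * firstPassage p x y k (f m) := by
  induction k generalizing m f with
  | zero =>
    by_cases h : f m = y
    · simp only [firstPassage, h, if_true, mul_one]
      congr 1
      ext ω
      simp only [Set.mem_ofPred_eq]
      constructor
      · exact fun h => h.1
      · exact fun h' => ⟨h', by simp, by simpa [h] using h' m le_rfl⟩
    · simp only [firstPassage, h, if_false, mul_zero]
      convert measure_empty (μ := μ)
      ext ω
      simp only [Set.mem_ofPred_eq, Set.mem_empty_iff_false, iff_false]
      rintro ⟨h1, -, h2⟩
      exact h (by rw [← h1 m le_rfl]; exact h2)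
  | succ k ih =>
    by_cases h : f m = x ∨ f m = y
    · simp only [firstPassage, h, if_true, mul_zero]
      convert measure_empty (μ := μ)
      ext ω
      simp only [Set.mem_ofPred_eq, Set.mem_empty_iff_false, iff_false]
      rintro ⟨h1, h2, -⟩
      have := h2 0 (by omega)
      rw [add_zero, h1 m le_rfl] at this
      tauto
    · have hcyl : ∀ v, (∀ i ≤ m, Function.update f (m + 1) v i = f i) ∧
          Function.update f (m + 1) v (m + 1) = v := fun v =>
        ⟨fun i hi => Function.update_of_ne (by omega) _ _, Function.update_self _ _ _⟩
      have key : {ω : ℕ → S | (∀ i ≤ m, ω i = f i) ∧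
            (∀ j < k + 1, ω (m + j) ≠ x ∧ ω (m + j) ≠ y) ∧ ω (m + (k + 1)) = y} =
          ⋃ v : S, {ω | (∀ i ≤ m + 1, ω i = Function.update f (m + 1) v i) ∧
            (∀ j < k, ω (m + 1 + j) ≠ x ∧ ω (m + 1 + j) ≠ y) ∧ ω (m + 1 + k) = y} := by
        ext ω
        simp only [Set.mem_ofPred_eq, Set.mem_iUnion]
        constructor
        · rintro ⟨h1, h2, h3⟩
          refine ⟨ω (m + 1), ?_, ?_, ?_⟩
          · intro i hi
            rcases Nat.lt_or_ge m i with h' | h'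
            · obtain rfl : i = m + 1 := by omega
              rw [(hcyl _).2]
            · rw [(hcyl _).1 i h', h1 i h']
          · intro j hj
            have := h2 (j + 1) (by omega)
            rwa [show m + (j + 1) = m + 1 + j by omega] at this
          · rwa [show m + (k + 1) = m + 1 + k by omega] at h3
        · rintro ⟨v, h1, h2, h3⟩
          have h1' : ∀ i ≤ m, ω i = f i := fun i hi => by
            rw [h1 i (by omega), (hcyl v).1 i hi]
          refine ⟨h1', ?_, ?_⟩
          · intro j hj
            rcases j with _ | j
            · rw [add_zero, h1' m le_rfl]; tauto
            · have := h2 j (by omega)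
              rwa [show m + 1 + j = m + (j + 1) by omega] at this
          · rwa [show m + 1 + k = m + (k + 1) by omega] at h3
      rw [key, measure_iUnion]
      · simp only [ih, (hcyl _).2, firstPassage, h, if_false]
        rw [← ENNReal.tsum_mul_left]
        refine tsum_congr fun v => ?_
        rw [hμ, hμ, Finset.prod_range_succ, (hcyl v).2, (hcyl v).1 m le_rfl,
          (hcyl v).1 0 (Nat.zero_le _), Finset.prod_congr rfl (g := fun k =>
            ENNReal.ofReal (p (f k) (f (k + 1))))]
        · ring
        · intro i hi
          rw [Finset.mem_range] at hi
          rw [(hcyl v).1 i (by omega), (hcyl v).1 (i + 1) (by omega)]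
      · intro v w hvw
        refine Set.disjoint_left.2 fun ω h1 h2 => hvw ?_
        rw [← (hcyl v).2, ← (hcyl w).2, ← h1.1 _ le_rfl, ← h2.1 _ le_rfl]
      · intro v
        exact Measurable.setOf (by fun_prop)

theorem hitTime_lt_hitTime1_iff {S : Type} {x y : S} (ω : ℕ → S) :
    hitTime {y} ω < hitTime1 {x} ω ↔ ∃ k : ℕ, ω k = y ∧ ∀ j, 1 ≤ j → j ≤ k → ω j ≠ x := by
  unfold hitTime
  rw [sInf_lt_iff]
  constructor
  · rintro ⟨_, ⟨k, rfl, hk⟩, hlt⟩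
    refine ⟨k, hk, fun j hj hjk hx => ?_⟩
    have : hitTime1 {x} ω ≤ (j : ℕ∞) := sInf_le ⟨j, hj, rfl, hx⟩
    exact absurd (hlt.trans_le this) (by simpa using hjk)
  · rintro ⟨k, hk, h⟩
    refine ⟨k, ⟨k, rfl, hk⟩, lt_of_lt_of_le (b := ((k + 1 : ℕ) : ℕ∞)) (by exact_mod_cast k.lt_succ_self) ?_⟩
    refine le_sInf ?_
    rintro _ ⟨j, hj, rfl, hx⟩
    by_contra hlt
    exact h j hj (by simp only [not_le, Nat.cast_lt] at hlt; omega) hx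

/-- Decomposition of the escape event by the value of the first passage time `k + 1` to `y`. -/
theorem escape_iff {S : Type} {x y : S} (hxy : x ≠ y) (ω : ℕ → S) (h0 : ω 0 = x) :
    hitTime {y} ω < hitTime1 {x} ω ↔
      ∃ k, (∀ j < k, ω (1 + j) ≠ x ∧ ω (1 + j) ≠ y) ∧ ω (1 + k) = y := by
  rw [hitTime_lt_hitTime1_iff]
  constructor
  · rintro ⟨k, hk, h⟩
    have hex : ∃ k, ω k = y := ⟨k, hk⟩
    have hs := Nat.find_spec hex
    have hle := Nat.find_min' hex hk
    have hmin := fun {j} => Nat.find_min (m := j) hex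
    generalize Nat.find hex = l at hs hle hmin
    rcases l with _ | l
    · exact absurd (h0.symm.trans hs) hxy
    · refine ⟨l, fun j hj => ⟨h _ (by omega) (by omega), hmin (by omega)⟩, ?_⟩
      rwa [add_comm]
  · rintro ⟨k, h, hk⟩
    refine ⟨1 + k, hk, fun j hj hjk => ?_⟩
    obtain ⟨j, rfl⟩ := Nat.exists_eq_add_of_le hj
    rcases Nat.lt_or_ge j k with h' | h'
    · exact (h j h').1
    · obtain rfl : j = k := by omega
      rw [hk]; exact hxy.symm

theorem measure_escape_aux {S : Type} [Countable S] [MeasurableSpace S]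
    [DiscreteMeasurableSpace S] (μ : Measure (ℕ → S)) (p : S → S → ℝ) {x y : S} (hxy : x ≠ y)
    (h1 : μ Set.univ = 1)
    (hμ : ∀ (n : ℕ) (f : ℕ → S), μ {ω | ∀ k ≤ n, ω k = f k} =
        (if f 0 = x then 1 else 0) *
          ∏ k ∈ Finset.range n, ENNReal.ofReal (p (f k) (f (k + 1)))) :
    μ {ω | hitTime {y} ω < hitTime1 {x} ω} =
      ∑' v, ENNReal.ofReal (p x v) * hitBefore p x y v := by
  have : IsProbabilityMeasure μ := ⟨h1⟩
  have hstart : ∀ᵐ ω ∂μ, ω 0 = x := by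
    have h := hμ 0 (fun _ => x)
    simp only [Nat.le_zero, forall_eq, if_true, Finset.range_zero, Finset.prod_empty,
      mul_one] at h
    exact (prob_compl_eq_zero_iff (Measurable.setOf (by fun_prop))).2 h
  -- The index records both the first passage time and the position after one step.
  let E : ℕ × S → Set (ℕ → S) := fun q => {ω | (∀ i ≤ 1, ω i = if i = 0 then x else q.2) ∧
      (∀ j < q.1, ω (1 + j) ≠ x ∧ ω (1 + j) ≠ y) ∧ ω (1 + q.1) = y}
  have hE : {ω | hitTime {y} ω < hitTime1 {x} ω} =ᵐ[μ] ⋃ q, E q := by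
    filter_upwards [hstart] with ω hω
    refine propext ?_
    change hitTime {y} ω < hitTime1 {x} ω ↔ ω ∈ ⋃ q, E q
    rw [escape_iff hxy ω hω, Set.mem_iUnion]
    constructor
    · rintro ⟨k, hk⟩
      refine ⟨(k, ω 1), ?_, hk⟩
      intro i hi
      interval_cases i <;> simp [hω]
    · rintro ⟨q, -, hq⟩
      exact ⟨q.1, hq⟩
  rw [measure_congr hE, measure_iUnion, ENNReal.tsum_prod (f := fun k v => μ (E (k, v))), tsum_mul_hitBefore]
  · refine tsum_congr fun k => tsum_congr fun v => ?_
    have := measure_cylinder_firstPassage μ p x x y hμ k 1 (fun i => if i = 0 then x else v)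
    refine this.trans ?_
    rw [hμ]
    simp
  · rintro ⟨k, v⟩ ⟨l, w⟩ hne
    refine Set.disjoint_left.2 fun ω h1 h2 => hne ?_
    have hvw : v = w := by
      have a := h1.1 1 le_rfl
      have b := h2.1 1 le_rfl
      simp only [one_ne_zero, if_false] at a b
      exact a.symm.trans b
    have hkl : k = l := by
      rcases Nat.lt_trichotomy k l with h | h | h
      · exact absurd h1.2.2 (h2.2.1 k h).2
      · exact h
      · exact absurd h2.2.2 (h1.2.1 l h).2
    rw [hvw, hkl]
  · intro q
    exact Measurable.setOf (by fun_prop)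

/-- One-step formula for the escape probability. -/
theorem IsRandomWalk.measure_escape {S : Type} [Countable S] {μ : TrajMeasure S} {p : S → S → ℝ}
    {x y : S} (h : IsRandomWalk p x μ) (hxy : x ≠ y) :
    μ {ω | hitTime {y} ω < hitTime1 {x} ω} =
      ∑' v, ENNReal.ofReal (p x v) * hitBefore p x y v := by
  let _ : MeasurableSpace S := ⊤
  exact measure_escape_aux μ p hxy h.1 h.2

/-! ### Transition operators of the induced and of the extended graph -/

namespace WeightedGraph

variable {V : Type} (G : WeightedGraph V) (A : Finset V)

/-- The total weight of the edges from `v` to the complement of `A`. -/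
noncomputable def outW (v : V) : ℝ := ∑' z, (if z ∈ A then 0 else G.c v z)

theorem outW_nonneg (v : V) : 0 ≤ G.outW A v :=
  tsum_nonneg fun z => by split_ifs <;> simp [G.nonneg]

theorem degIn_add_outW (v : V) : G.degIn A v + G.outW A v = G.deg v := by
  have h1 : G.degIn A v = ∑' z, (if z ∈ A then G.c v z else 0) := by
    rw [tsum_eq_sum (s := A) (fun z hz => if_neg hz)]
    exact Finset.sum_congr rfl fun z hz => (if_pos hz).symm
  have s1 : Summable fun z => if z ∈ A then G.c v z else 0 :=
    summable_of_ne_finset_zero (s := A) fun z hz => if_neg hz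
  have s2 : Summable fun z => if z ∈ A then 0 else G.c v z :=
    (G.row_summable v).of_nonneg_of_le (fun z => by split_ifs <;> simp [G.nonneg])
      fun z => by split_ifs <;> simp [G.nonneg]
  rw [h1, outW, deg, ← s1.tsum_add s2]
  exact tsum_congr fun z => by split_ifs <;> simp

variable {A}

theorem extW_inl_eq_zero {u : V} {t : V ⊕ V} (ht : t ∉ A.disjSum {u}) :
    extW G A (Sum.inl u) t = 0 := by
  rcases t with v | v
  · have : v ∉ A := by simpa using ht
    simp [extW, this]
  · have : ¬ u = v := by simpa [eq_comm] using ht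
    simp [extW, this]

theorem extW_inr_eq_zero {u : V} {t : V ⊕ V} (ht : t ≠ Sum.inl u) :
    extW G A (Sum.inr u) t = 0 := by
  rcases t with v | v
  · have : v ≠ u := by simpa using ht
    simp [extW, this]
  · rfl

theorem extDeg_inl {u : V} (hu : u ∈ A) : extDeg G A (Sum.inl u) = G.deg u := by
  rw [extDeg, tsum_eq_sum (s := A.disjSum {u}) (fun t ht => extW_inl_eq_zero G ht),
    Finset.sum_disjSum, ← degIn_add_outW G A, degIn]
  congr 1
  · exact Finset.sum_congr rfl fun v hv => by simp [extW, hu, hv]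
  · simp [extW, hu, outW]

theorem extTrans_inr_le_one (u : V) : extTrans G A (Sum.inr u) (Sum.inl u) ≤ 1 := by
  rw [extTrans, extDeg, tsum_eq_single (Sum.inl u) fun t ht => extW_inr_eq_zero G ht]
  exact div_self_le_one _

theorem extTrans_inr {u : V} (hu : u ∈ A) (h : G.outW A u ≠ 0) :
    extTrans G A (Sum.inr u) (Sum.inl u) = 1 := by
  rw [extTrans, extDeg, tsum_eq_single (Sum.inl u) fun t ht => extW_inr_eq_zero G ht]
  refine div_self ?_
  simpa [extW, hu, outW] using h

theorem tsum_extTrans_inr (u : V) (F : V ⊕ V → ℝ≥0∞) :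
    ∑' t, ENNReal.ofReal (extTrans G A (Sum.inr u) t) * F t =
      ENNReal.ofReal (extTrans G A (Sum.inr u) (Sum.inl u)) * F (Sum.inl u) :=
  tsum_eq_single _ fun t ht => by simp [extTrans, extW_inr_eq_zero G ht]

theorem tsum_transIn {u : V} (hu : u ∈ A) (F : V → ℝ≥0∞) :
    ∑' v, ENNReal.ofReal (transIn G A u v) * F v =
      ∑ v ∈ A, ENNReal.ofReal (G.c u v / G.degIn A u) * F v := by
  rw [tsum_eq_sum (s := A) fun v hv => by simp [transIn, restrictW, hv]]
  exact Finset.sum_congr rfl fun v hv => by simp [transIn, restrictW, hu, hv]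

/-- A step of the extended walk from `u ∈ A` is a step of the induced walk with probability
`degIn A u / deg u`, and a step to the boundary copy of `u` otherwise. -/
theorem tsum_extTrans_inl {u : V} (hu : u ∈ A) (hd : 0 < G.degIn A u) (F : V ⊕ V → ℝ≥0∞) :
    ∑' t, ENNReal.ofReal (extTrans G A (Sum.inl u) t) * F t =
      ENNReal.ofReal (G.degIn A u / G.deg u) *
          ∑' v, ENNReal.ofReal (transIn G A u v) * F (Sum.inl v) +
        ENNReal.ofReal (G.outW A u / G.deg u) * F (Sum.inr u) := by
  have hD : 0 < G.deg u := by
    rw [← degIn_add_outW G A]; linarith [G.outW_nonneg A u]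
  rw [tsum_eq_sum (s := A.disjSum {u}) (fun t ht => by simp [extTrans, extW_inl_eq_zero G ht]),
    Finset.sum_disjSum, tsum_transIn G hu fun v => F (Sum.inl v), Finset.mul_sum]
  congr 1
  · refine Finset.sum_congr rfl fun v hv => ?_
    rw [← mul_assoc, ← ENNReal.ofReal_mul (by positivity), extTrans, extDeg_inl G hu]
    simp only [extW, hu, hv, and_self, if_true]
    congr 2
    field_simp
  · simp [extTrans, extDeg_inl G hu, extW, hu, outW]

theorem ofReal_degIn_add_outW {u : V} (hd : 0 < G.degIn A u) :
    ENNReal.ofReal (G.degIn A u / G.deg u) + ENNReal.ofReal (G.outW A u / G.deg u) = 1 := by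
  have hD : 0 < G.deg u := by
    rw [← degIn_add_outW G A]; linarith [G.outW_nonneg A u]
  rw [← ENNReal.ofReal_add (by positivity) (div_nonneg (G.outW_nonneg A u) hD.le), ← add_div,
    degIn_add_outW, div_self hD.ne', ENNReal.ofReal_one]

/-- In a connected finite piece with at least two vertices every vertex has positive degree. -/
theorem degIn_pos {x y : V} (hxA : x ∈ A) (hyA : y ∈ A) (hxy : x ≠ y)
    (hA : ∀ x ∈ A, ∀ y ∈ A,
      Relation.ReflTransGen (fun a b => a ∈ A ∧ b ∈ A ∧ 0 < G.c a b) x y)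
    {u : V} (hu : u ∈ A) : 0 < G.degIn A u := by
  obtain ⟨w, hw, hne⟩ : ∃ w ∈ A, u ≠ w := by
    by_cases h : u = x
    · exact ⟨y, hyA, h ▸ hxy⟩
    · exact ⟨x, hxA, h⟩
  rcases (hA u hu w hw).cases_head with h | ⟨a, ⟨-, ha, hc⟩, -⟩
  · exact absurd h hne
  · exact Finset.sum_pos' (fun i _ => G.nonneg u i) ⟨a, ha, hc⟩

/-! ### Comparison of the two hitting probabilities -/

section Comparison

variable {x y : V} (hd : ∀ u ∈ A, 0 < G.degIn A u)
include hd

theorem hitBefore_transIn_le_one (u : V) : hitBefore (G.transIn A) x y u ≤ 1 := by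
  refine hitBefore_le _ _ _ (fun _ => 1) le_rfl (fun u _ _ => ?_) u
  by_cases hu : u ∈ A
  · rw [tsum_transIn G hu fun _ => 1]
    simp only [mul_one]
    rw [← ENNReal.ofReal_sum_of_nonneg
      fun v _ => div_nonneg (G.nonneg u v) (hd u hu).le, ← Finset.sum_div]
    exact ENNReal.ofReal_le_one.2 (div_self_le_one _)
  · simp [transIn, restrictW, hu]

/-- Extending the hitting probability of the induced walk to each boundary copy by its value at the
original vertex gives a superharmonic function for the extended walk. -/
theorem hitBefore_extTrans_le (t : V ⊕ V) :
    hitBefore (G.extTrans A) (Sum.inl x) (Sum.inl y) t ≤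
      Sum.elim (hitBefore (G.transIn A) x y) (hitBefore (G.transIn A) x y) t := by
  refine hitBefore_le _ _ _ _ (by simp [hitBefore_target]) (fun t hx hy => ?_) t
  rcases t with u | u
  · by_cases hu : u ∈ A
    · rw [tsum_extTrans_inl G hu (hd u hu)]
      simp only [Sum.elim_inl, Sum.elim_inr]
      rw [← hitBefore_harmonic _ (by simpa using hx) (by simpa using hy), ← add_mul,
        ofReal_degIn_add_outW G (hd u hu), one_mul]
    · have : ∀ t, extTrans G A (Sum.inl u) t = 0 := by
        rintro (v | v) <;> simp [extTrans, extW, hu]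
      simp [this]
  · rw [tsum_extTrans_inr]
    exact mul_le_of_le_one_left' (ENNReal.ofReal_le_one.2 (extTrans_inr_le_one G u))

/-- Since an excursion to a boundary copy returns to its starting vertex, it does not affect the
hitting probability. -/
theorem hitBefore_extTrans_inl (u : V) :
    hitBefore (G.extTrans A) (Sum.inl x) (Sum.inl y) (Sum.inl u) =
      hitBefore (G.transIn A) x y u := by
  refine le_antisymm (hitBefore_extTrans_le G hd (Sum.inl u)) ?_
  refine hitBefore_le _ _ _
    (fun u => hitBefore (G.extTrans A) (Sum.inl x) (Sum.inl y) (Sum.inl u))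
    (hitBefore_target _ _ _).ge (fun u hux huy => ?_) u
  by_cases hu : u ∈ A
  swap
  · simp [transIn, restrictW, hu]
  have hfin : hitBefore (G.extTrans A) (Sum.inl x) (Sum.inl y) (Sum.inl u) ≠ ⊤ :=
    ne_top_of_le_ne_top ENNReal.one_ne_top
      ((hitBefore_extTrans_le G hd (Sum.inl u)).trans (hitBefore_transIn_le_one G hd u))
  have hharm := hitBefore_harmonic (G.extTrans A) (x := Sum.inl x) (y := Sum.inl y)
    (u := Sum.inl u) (by simpa using hux) (by simpa using huy)
  rw [tsum_extTrans_inl G hu (hd u hu)] at hharm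
  have hcopy : ENNReal.ofReal (G.outW A u / G.deg u) *
        hitBefore (G.extTrans A) (Sum.inl x) (Sum.inl y) (Sum.inr u) =
      ENNReal.ofReal (G.outW A u / G.deg u) *
        hitBefore (G.extTrans A) (Sum.inl x) (Sum.inl y) (Sum.inl u) := by
    by_cases h : G.outW A u = 0
    · simp [h]
    · rw [hitBefore_harmonic (u := Sum.inr u) _ (by simp) (by simp), tsum_extTrans_inr,
        extTrans_inr G hu h, ENNReal.ofReal_one, one_mul]
  rw [hcopy] at hharm
  -- With `a + b = 1`, the equation `h = a * s + b * h` forces `h = s`, as `a ≠ 0` and `h` is finite.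
  have hab := ofReal_degIn_add_outW G (hd u hu)
  have hD : 0 < G.deg u := by
    rw [← degIn_add_outW G A]; linarith [G.outW_nonneg A u, hd u hu]
  have ha : ENNReal.ofReal (G.degIn A u / G.deg u) ≠ 0 := by
    simpa using div_pos (hd u hu) hD
  set h := hitBefore (G.extTrans A) (Sum.inl x) (Sum.inl y) (Sum.inl u)
  have h2 : ENNReal.ofReal (G.degIn A u / G.deg u) * h +
      ENNReal.ofReal (G.outW A u / G.deg u) * h = h := by rw [← add_mul, hab, one_mul]
  have h3 := h2.trans hharm
  rw [ENNReal.add_left_inj (ENNReal.mul_ne_top ENNReal.ofReal_ne_top hfin)] at h3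
  exact ((ENNReal.mul_right_inj ha ENNReal.ofReal_ne_top).1 h3).ge

end Comparison

end WeightedGraph

/-- For an infinite, connected weighted graph `G` with finite
exhaustion `(Vₙ)`: for all `n` and all distinct `x, y ∈ Vₙ`,
`P̄ⁿ_x[τ_y < τ_x⁺] = ((cₙ)_x / c_x) · Pⁿ_x[τ_y < τ_x⁺]`. -/
theorem extended_escape_prob_eq_scaled_finite_escape_prob
    {V : Type} [Countable V] [Infinite V] (G : WeightedGraph V) (hconn : G.Connected)
    (Vn : ℕ → Finset V) (hVn : G.IsExhaustion Vn)
    (Pn : ℕ → V → TrajMeasure V)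
    (hPn : ∀ n : ℕ, ∀ x ∈ Vn n, IsRandomWalk (G.transIn (Vn n)) x (Pn n x))
    (Pbar : ℕ → V → TrajMeasure (V ⊕ V))
    (hPbar : ∀ n : ℕ, ∀ x ∈ Vn n,
      IsRandomWalk (G.extTrans (Vn n)) (Sum.inl x) (Pbar n x)) :
    ∀ n : ℕ, ∀ x ∈ Vn n, ∀ y ∈ Vn n, x ≠ y →
      Pbar n x {ω | hitTime {Sum.inl y} ω < hitTime1 {Sum.inl x} ω} =
        ENNReal.ofReal (G.degIn (Vn n) x / G.deg x) *
          Pn n x {ω | hitTime {y} ω < hitTime1 {x} ω} := by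
  intro n x hx y hy hxy
  have hd : ∀ u ∈ Vn n, 0 < G.degIn (Vn n) u := fun u hu =>
    G.degIn_pos hx hy hxy (hVn.2.2 n) hu
  rw [(hPn n x hx).measure_escape hxy,
    (hPbar n x hx).measure_escape (fun h => hxy (Sum.inl_injective h)),
    G.tsum_extTrans_inl hx (hd x hx)]
  have hcopy : hitBefore (G.extTrans (Vn n)) (Sum.inl x) (Sum.inl y) (Sum.inr x) = 0 :=
    le_zero_iff.1 ((G.hitBefore_extTrans_le hd (Sum.inr x)).trans
      (hitBefore_avoid _ hxy).le)
  simp only [hcopy, mul_zero, add_zero, G.hitBefore_extTrans_inl hd]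
end
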